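/- Let n ≥ 3. There exists a constant a₁ > 0 depending only on n such that for every smooth ℤⁿ-periodic real-valued eigenfunction ψ : ℝⁿ → ℝ of the Euclidean Laplacian with eigenvalue λ ≥ 1, every nodal domain Ω of ψ satisfies in(Ω) ≥ a₁ λ^{-1/2-(n-1)(n-2)/(4n)}. -/

import Mathlib

open MeasureTheory Metric Filter Real

noncomputable section

/-- `ψ : ℝⁿ → ℝ` is `ℤⁿ`-periodic: `ψ (x + v) = ψ x` for every integer vector `v`. -/
def ZnPeriodic (n : ℕ) (ψ : EuclideanSpace ℝ (Fin n) → ℝ) : Prop :=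
  ∀ (x : EuclideanSpace ℝ (Fin n)) (v : Fin n → ℤ),
    ψ (show EuclideanSpace ℝ (Fin n) from WithLp.toLp 2 fun i => x i + (v i : ℝ)) = ψ x

/-- The Euclidean Laplacian `Δψ = ∑ᵢ ∂²ψ/∂xᵢ²`. -/
def lap (n : ℕ) (ψ : EuclideanSpace ℝ (Fin n) → ℝ) (x : EuclideanSpace ℝ (Fin n)) : ℝ :=
  ∑ i : Fin n,
    fderiv ℝ (fun y => fderiv ℝ ψ y (EuclideanSpace.single i (1:ℝ))) x
      (EuclideanSpace.single i (1:ℝ))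

/-- `Ω` is a nodal domain of `ψ`: a connected component of `{ψ ≠ 0}`. -/
def IsNodalDomain {n : ℕ} (ψ : EuclideanSpace ℝ (Fin n) → ℝ)
    (Ω : Set (EuclideanSpace ℝ (Fin n))) : Prop :=
  ∃ x, ψ x ≠ 0 ∧ Ω = connectedComponentIn {y | ψ y ≠ 0} x

/-- The inner radius of a set: the supremum of radii of open balls contained in it. -/
def innerRadius {n : ℕ} (Ω : Set (EuclideanSpace ℝ (Fin n))) : ℝ :=
  sSup {ρ : ℝ | 0 < ρ ∧ ∃ c, Metric.ball c ρ ⊆ Ω}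

/-- The fundamental domain `[0,1)ⁿ` of the torus `ℝⁿ/ℤⁿ`. -/
def fundDom (n : ℕ) : Set (EuclideanSpace ℝ (Fin n)) :=
  {x | ∀ i, x i ∈ Set.Ico (0:ℝ) 1}

/-- `S ⊆ ℕ` has full density: `#(S ∩ [1,N]) / N → 1`. -/
def FullDensity (S : Set ℕ) : Prop :=
  Filter.Tendsto (fun N => (Nat.card ↥(S ∩ Set.Icc 1 N) : ℝ) / N) Filter.atTop (nhds 1)

/-- iterated line derivatives at a point -/
def HasLap {n : ℕ} (f : EuclideanSpace ℝ (Fin n) → ℝ) (y : EuclideanSpace ℝ (Fin n))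
    (a : Fin n → ℝ) : Prop :=
  ∀ i, ∃ g1 : ℝ → ℝ,
    (∀ᶠ s in nhds (0:ℝ), HasDerivAt
      (fun s : ℝ => f (y + s • EuclideanSpace.single i (1:ℝ))) (g1 s) s) ∧
    HasDerivAt g1 (a i) 0

lemma second_deriv_nonpos {g g1 : ℝ → ℝ} {a : ℝ}
    (h1 : ∀ᶠ s in nhds (0:ℝ), HasDerivAt g (g1 s) s) (h2 : HasDerivAt g1 a 0)
    (hm : IsLocalMax g 0) : a ≤ 0 := by
  by_contra hpos
  push Not at hpos
  have hd : deriv g =ᶠ[nhds 0] g1 := h1.mono fun s hs => hs.deriv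
  have h2' : deriv (deriv g) 0 = a := by
    rw [hd.deriv_eq]; exact h2.deriv
  have h0 : deriv g 0 = 0 := hm.deriv_eq_zero
  have hmin : IsLocalMin g 0 :=
    isLocalMin_of_deriv_deriv_pos (by rw [h2']; exact hpos) h0 h1.self_of_nhds.continuousAt
  have hconst : g =ᶠ[nhds 0] fun _ => g 0 := by
    filter_upwards [hm, hmin] with s hs1 hs2
    exact le_antisymm hs1 hs2
  have hd0 : deriv g =ᶠ[nhds 0] fun _ => 0 := by
    have := hconst.deriv
    simpa using this
  have : deriv (deriv g) 0 = 0 := by rw [hd0.deriv_eq]; simp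
  linarith

lemma HasLap.nonpos {n : ℕ} {f : EuclideanSpace ℝ (Fin n) → ℝ} {y : EuclideanSpace ℝ (Fin n)}
    {a : Fin n → ℝ} (h : HasLap f y a) (hm : IsLocalMax f y) (i : Fin n) : a i ≤ 0 := by
  obtain ⟨g1, h1, h2⟩ := h i
  refine second_deriv_nonpos h1 h2 ?_
  have hc : ContinuousAt (fun s : ℝ => y + s • (EuclideanSpace.single i (1:ℝ) :
      EuclideanSpace ℝ (Fin n))) 0 := by fun_prop
  have : Tendsto (fun s : ℝ => y + s • (EuclideanSpace.single i (1:ℝ) :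
      EuclideanSpace ℝ (Fin n))) (nhds 0) (nhds y) := by
    simpa [ContinuousAt] using hc
  have h3 := this.eventually hm
  filter_upwards [h3] with s hs
  simpa using hs

lemma HasLap.add {n : ℕ} {f g : EuclideanSpace ℝ (Fin n) → ℝ} {y : EuclideanSpace ℝ (Fin n)}
    {a b : Fin n → ℝ} (hf : HasLap f y a) (hg : HasLap g y b) :
    HasLap (fun x => f x + g x) y (fun i => a i + b i) := by
  intro i
  obtain ⟨f1, h1, h2⟩ := hf i
  obtain ⟨g1, h3, h4⟩ := hg i
  refine ⟨fun s => f1 s + g1 s, ?_, h2.add h4⟩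
  filter_upwards [h1, h3] with s hs1 hs2
  exact hs1.add hs2

lemma HasLap.const_mul {n : ℕ} {f : EuclideanSpace ℝ (Fin n) → ℝ} {y : EuclideanSpace ℝ (Fin n)}
    {a : Fin n → ℝ} (c : ℝ) (hf : HasLap f y a) :
    HasLap (fun x => c * f x) y (fun i => c * a i) := by
  intro i
  obtain ⟨f1, h1, h2⟩ := hf i
  refine ⟨fun s => c * f1 s, ?_, h2.const_mul c⟩
  filter_upwards [h1] with s hs1
  exact hs1.const_mul c

lemma hasLap_const {n : ℕ} (c : ℝ) (y : EuclideanSpace ℝ (Fin n)) :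
    HasLap (fun _ => c) y (fun _ => 0) := fun _ =>
  ⟨fun _ => 0, Eventually.of_forall fun s => hasDerivAt_const s c, hasDerivAt_const _ _⟩

lemma HasLap.sum {n : ℕ} {ι : Type*} (t : Finset ι) {f : ι → EuclideanSpace ℝ (Fin n) → ℝ}
    {y : EuclideanSpace ℝ (Fin n)} {a : ι → Fin n → ℝ} (h : ∀ b ∈ t, HasLap (f b) y (a b)) :
    HasLap (fun x => ∑ b ∈ t, f b x) y (fun i => ∑ b ∈ t, a b i) := by
  classical
  induction t using Finset.induction_on with
  | empty => simpa using hasLap_const 0 y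
  | insert b t hb ih =>
    simp only [Finset.sum_insert hb]
    exact (h b (by simp)).add (ih fun c hc => h c (by simp [hc]))

lemma hasDerivAt_line {n : ℕ} {f : EuclideanSpace ℝ (Fin n) → ℝ} (hf : Differentiable ℝ f)
    (y v : EuclideanSpace ℝ (Fin n)) (s : ℝ) :
    HasDerivAt (fun s : ℝ => f (y + s • v)) (fderiv ℝ f (y + s • v) v) s := by
  have h1 : HasDerivAt (fun s : ℝ => y + s • v) v s := by
    simpa using ((hasDerivAt_id s).smul_const v).const_add y
  exact (hf (y + s • v)).hasFDerivAt.comp_hasDerivAt s h1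

lemma contDiff_pd {n : ℕ} {f : EuclideanSpace ℝ (Fin n) → ℝ} (hf : ContDiff ℝ (⊤ : ℕ∞) f)
    (v : EuclideanSpace ℝ (Fin n)) : ContDiff ℝ (⊤ : ℕ∞) (fun y => fderiv ℝ f y v) := by
  have : ContDiff ℝ (⊤ : ℕ∞) (fderiv ℝ f) := hf.fderiv_right (by simp)
  exact this.clm_apply contDiff_const

lemma diff_of_cd {n : ℕ} {f : EuclideanSpace ℝ (Fin n) → ℝ} (hf : ContDiff ℝ (⊤ : ℕ∞) f) :
    Differentiable ℝ f := hf.differentiable (by simp)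

lemma hasLap_smooth {n : ℕ} {f : EuclideanSpace ℝ (Fin n) → ℝ} (hf : ContDiff ℝ (⊤ : ℕ∞) f)
    (y : EuclideanSpace ℝ (Fin n)) :
    HasLap f y (fun i => fderiv ℝ (fun y => fderiv ℝ f y (EuclideanSpace.single i (1:ℝ))) y
      (EuclideanSpace.single i (1:ℝ))) := by
  intro i
  refine ⟨fun s => fderiv ℝ f (y + s • EuclideanSpace.single i (1:ℝ))
    (EuclideanSpace.single i (1:ℝ)), Eventually.of_forall fun s => ?_, ?_⟩
  · exact hasDerivAt_line (diff_of_cd hf) _ _ _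
  · have := hasDerivAt_line (diff_of_cd (contDiff_pd hf (EuclideanSpace.single i (1:ℝ)))) y
      (EuclideanSpace.single i (1:ℝ)) 0
    simpa using this

lemma normsq_line {n : ℕ} (y p : EuclideanSpace ℝ (Fin n)) (i : Fin n) (s : ℝ) :
    ‖y + s • (EuclideanSpace.single i (1:ℝ) : EuclideanSpace ℝ (Fin n)) - p‖ ^ 2
      = ‖y - p‖ ^ 2 + 2 * s * (y i - p i) + s ^ 2 := by
  have : y + s • (EuclideanSpace.single i (1:ℝ) : EuclideanSpace ℝ (Fin n)) - p
      = (y - p) + s • (EuclideanSpace.single i (1:ℝ) : EuclideanSpace ℝ (Fin n)) := by abel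
  rw [this, norm_add_sq_real, inner_smul_right, norm_smul]
  simp [EuclideanSpace.inner_single_right]
  ring

lemma hasDerivAt_quad (A B s : ℝ) :
    HasDerivAt (fun s : ℝ => A + 2 * s * B + s ^ 2) (2 * B + 2 * s) s := by
  have h1 := (((hasDerivAt_id s).const_mul 2).mul_const B).const_add A
  have h2 := h1.add ((hasDerivAt_id s).pow 2)
  refine (h2.congr_deriv ?_)
  simp

lemma hasLap_normsq {n : ℕ} (y p : EuclideanSpace ℝ (Fin n)) :
    HasLap (fun x => ‖x - p‖ ^ 2) y (fun _ => 2) := by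
  intro i
  refine ⟨fun s => 2 * (y i - p i) + 2 * s, Eventually.of_forall fun s => ?_, ?_⟩
  · simp only [normsq_line]
    exact hasDerivAt_quad _ _ _
  · simpa using ((hasDerivAt_id (0:ℝ)).const_mul 2).const_add (2 * (y i - p i))

lemma hasLap_rpow {n : ℕ} (y p : EuclideanSpace ℝ (Fin n)) (hyp : y ≠ p) (α : ℝ) :
    HasLap (fun x => (‖x - p‖ ^ 2) ^ (-α)) y (fun i => α * (α + 1) * (‖y - p‖ ^ 2) ^ (-α - 1 - 1)
      * (2 * (y i - p i)) ^ 2 - 2 * α * (‖y - p‖ ^ 2) ^ (-α - 1)) := by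
  intro i
  have hq0 : 0 < ‖y - p‖ ^ 2 := by
    have : 0 < ‖y - p‖ := norm_pos_iff.mpr (sub_ne_zero.mpr hyp)
    positivity
  refine ⟨fun s => (2 * (y i - p i) + 2 * s) * (-α) *
    (‖y - p‖ ^ 2 + 2 * s * (y i - p i) + s ^ 2) ^ (-α - 1), ?_, ?_⟩
  · simp only [normsq_line]
    have hc : ContinuousAt (fun s : ℝ => ‖y - p‖ ^ 2 + 2 * s * (y i - p i) + s ^ 2) 0 := by fun_prop
    have hpos : ∀ᶠ s in nhds (0:ℝ), 0 < ‖y - p‖ ^ 2 + 2 * s * (y i - p i) + s ^ 2 := by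
      apply hc.eventually_const_lt
      simpa using hq0
    filter_upwards [hpos] with s hs
    exact (hasDerivAt_quad (‖y - p‖ ^ 2) (y i - p i) s).rpow_const (Or.inl hs.ne')
  · have h1 := (hasDerivAt_quad (‖y - p‖ ^ 2) (y i - p i) 0).rpow_const (p := -α - 1)
      (Or.inl (by simpa using hq0.ne'))
    have h2 := (((hasDerivAt_id (0:ℝ)).const_mul 2).const_add (2 * (y i - p i))).mul_const (-α)
    refine (h2.mul h1).congr_deriv ?_
    simp
    ring

lemma lap_rpow_eq {n : ℕ} (y p : EuclideanSpace ℝ (Fin n)) (hyp : y ≠ p) (α : ℝ)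
    (hα : 2 * α + 2 = n) :
    ∑ i, (α * (α + 1) * (‖y - p‖ ^ 2) ^ (-α - 1 - 1)
      * (2 * (y i - p i)) ^ 2 - 2 * α * (‖y - p‖ ^ 2) ^ (-α - 1)) = 0 := by
  have hq0 : 0 < ‖y - p‖ ^ 2 := by
    have : 0 < ‖y - p‖ := norm_pos_iff.mpr (sub_ne_zero.mpr hyp)
    positivity
  have hs : ∑ i, (y i - p i) ^ 2 = ‖y - p‖ ^ 2 := by
    rw [EuclideanSpace.norm_sq_eq]; simp
  have h1 : (‖y - p‖ ^ 2) ^ (-α - 1) = (‖y - p‖ ^ 2) ^ (-α - 1 - 1) * ‖y - p‖ ^ 2 := by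
    rw [Real.rpow_sub_one hq0.ne' (-α - 1)]
    exact (div_mul_cancel₀ _ hq0.ne').symm
  rw [Finset.sum_sub_distrib, ← Finset.mul_sum]
  simp only [mul_pow, ← Finset.mul_sum]
  rw [hs, h1]
  simp only [Finset.sum_const, Finset.card_univ, Fintype.card_fin, nsmul_eq_mul, ← hα]
  ring

lemma hasDerivAt_param {Y : Type*} [TopologicalSpace Y] [MeasurableSpace Y] [BorelSpace Y]
    [T2Space Y] [SecondCountableTopology Y]
    (μ : Measure Y) [IsFiniteMeasureOnCompacts μ] {K : Set Y} (hK : IsCompact K)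
    {F F' : ℝ → Y → ℝ} (hF : Continuous (Function.uncurry F))
    (hF' : Continuous (Function.uncurry F'))
    (hd : ∀ s y, HasDerivAt (fun s => F s y) (F' s y) s) (s₀ : ℝ) :
    HasDerivAt (fun s => ∫ y in K, F s y ∂μ) (∫ y in K, F' s₀ y ∂μ) s₀ := by
  obtain ⟨C, hC⟩ := ((isCompact_closedBall s₀ 1).prod hK).exists_bound_of_continuousOn
    hF'.continuousOn
  have hFs : ∀ s, Continuous (F s) := fun s => hF.comp (by fun_prop : Continuous fun y => (s, y))
  have hFs' : ∀ s, Continuous (F' s) := fun s => hF'.comp (by fun_prop : Continuous fun y => (s, y))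
  refine (hasDerivAt_integral_of_dominated_loc_of_deriv_le (s := closedBall s₀ 1)
    (bound := fun _ => C) (closedBall_mem_nhds s₀ one_pos) ?_ ?_ ?_ ?_ ?_ ?_).2
  · exact Eventually.of_forall fun s => (hFs s).aestronglyMeasurable
  · exact (hFs s₀).continuousOn.integrableOn_compact hK
  · exact (hFs' s₀).aestronglyMeasurable
  · refine (ae_restrict_iff' hK.measurableSet).2 (Eventually.of_forall fun y hy s hs => ?_)
    exact hC (s, y) ⟨hs, hy⟩
  · exact continuousOn_const.integrableOn_compact hK
  · exact Eventually.of_forall fun y s _ => hd s y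

/-- the kernel -/
def eta {n : ℕ} (y : EuclideanSpace ℝ (Fin n)) : ℝ := max (1 - ‖y‖ ^ 2) 0

lemma eta_nonneg {n : ℕ} (y : EuclideanSpace ℝ (Fin n)) : 0 ≤ eta y := le_max_right _ _

lemma eta_le_one {n : ℕ} (y : EuclideanSpace ℝ (Fin n)) : eta y ≤ 1 := by
  unfold eta; apply max_le <;> nlinarith [sq_nonneg ‖y‖]

lemma eta_zero_of {n : ℕ} {y : EuclideanSpace ℝ (Fin n)} (hy : y ∉ closedBall 0 1) : eta y = 0 := by
  simp at hy
  unfold eta; apply max_eq_right; nlinarith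

lemma eta_cont {n : ℕ} : Continuous (eta (n := n)) := by unfold eta; fun_prop

lemma hasDerivAt_maxsq (t : ℝ) : HasDerivAt (fun t : ℝ => (max t 0) ^ 2) (2 * max t 0) t := by
  rcases lt_trichotomy t 0 with h | h | h
  · rw [max_eq_right h.le]
    have : (fun t : ℝ => (max t 0) ^ 2) =ᶠ[nhds t] fun _ => 0 := by
      filter_upwards [Iio_mem_nhds h] with s hs
      rw [max_eq_right (le_of_lt hs)]; simp
    simpa using (hasDerivAt_const t (0:ℝ)).congr_of_eventuallyEq this
  · subst h
    rw [hasDerivAt_iff_isLittleO_nhds_zero]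
    simp only [zero_add, max_self, smul_eq_mul, mul_zero, sub_zero]
    have h1 : (fun h : ℝ => h ^ 2) =o[nhds 0] fun h : ℝ => h := by
      simpa using (Asymptotics.isLittleO_pow_id (𝕜 := ℝ) (n := 2) (by norm_num))
    refine Asymptotics.IsBigO.trans_isLittleO ?_ h1
    refine Asymptotics.isBigO_of_le _ fun x => ?_
    simp only [norm_pow, Real.norm_eq_abs]
    rcases le_total x 0 with hx | hx
    · rw [max_eq_right hx]; simp; positivity
    · rw [max_eq_left hx]; simp
  · rw [max_eq_left h.le]
    have : (fun t : ℝ => (max t 0) ^ 2) =ᶠ[nhds t] fun t => t ^ 2 := by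
      filter_upwards [Ioi_mem_nhds h] with s hs
      rw [max_eq_left (le_of_lt hs)]
    simpa using (hasDerivAt_pow 2 t).congr_of_eventuallyEq this

lemma hasFDerivAt_etasq {n : ℕ} (y : EuclideanSpace ℝ (Fin n)) :
    HasFDerivAt (fun y => eta y ^ 2) ((-(4 * eta y)) • innerSL ℝ y) y := by
  have h1 : HasFDerivAt (fun y : EuclideanSpace ℝ (Fin n) => 1 - ‖y‖ ^ 2)
      (-(2 • innerSL ℝ y)) y := (hasStrictFDerivAt_norm_sq y).hasFDerivAt.const_sub 1
  have h2 := (hasDerivAt_maxsq (1 - ‖y‖ ^ 2)).comp_hasFDerivAt y h1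
  refine h2.congr_fderiv ?_
  ext v
  simp [eta]
  ring

lemma ibp_eta {n : ℕ} {f : EuclideanSpace ℝ (Fin n) → ℝ} (hf : ContDiff ℝ (⊤ : ℕ∞) f)
    (x : EuclideanSpace ℝ (Fin n)) (r : ℝ) (i : Fin n) :
    ∫ y, f (x + r • y) * (y i * eta y) = r / 4 * ∫ y,
      fderiv ℝ f (x + r • y) (EuclideanSpace.single i (1:ℝ)) * eta y ^ 2 := by
  set e : EuclideanSpace ℝ (Fin n) := EuclideanSpace.single i (1:ℝ)
  have hcs : HasCompactSupport (eta (n := n)) :=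
    HasCompactSupport.intro (isCompact_closedBall 0 1) fun y hy => eta_zero_of hy
  have hcs2 : HasCompactSupport (fun y : EuclideanSpace ℝ (Fin n) => eta y ^ 2) :=
    HasCompactSupport.intro (isCompact_closedBall 0 1) fun y hy => by simp [eta_zero_of hy]
  have hA : ∀ y : EuclideanSpace ℝ (Fin n), fderiv ℝ (fun y => eta y ^ 2) y e = -4 * (y i * eta y) := by
    intro y
    rw [(hasFDerivAt_etasq y).fderiv]
    simp [e, EuclideanSpace.inner_single_right]
    ring
  have hB : ∀ y, HasFDerivAt (fun y => f (x + r • y)) (r • fderiv ℝ f (x + r • y)) y := by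
    intro y
    have h1 : HasFDerivAt (fun y : EuclideanSpace ℝ (Fin n) => x + r • y)
        (r • ContinuousLinearMap.id ℝ _) y := ((hasFDerivAt_id y).const_smul r).const_add x
    have := ((diff_of_cd hf) (x + r • y)).hasFDerivAt.comp y h1
    refine this.congr_fderiv ?_
    ext v; simp
  have hBv : ∀ y, fderiv ℝ (fun y => f (x + r • y)) y e = r * fderiv ℝ f (x + r • y) e := by
    intro y; rw [(hB y).fderiv]; simp
  have hfc : Continuous f := hf.continuous
  have hfc' : Continuous fun y => fderiv ℝ f y e := (contDiff_pd hf e).continuous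
  have hfc'' : Continuous fun y => fderiv ℝ f (x + r • y) e :=
    hfc'.comp (by fun_prop : Continuous fun y => x + r • y)
  have hec := eta_cont (n := n)
  have key := integral_mul_fderiv_eq_neg_fderiv_mul_of_integrable (μ := volume)
    (f := fun y => f (x + r • y)) (g := fun y : EuclideanSpace ℝ (Fin n) => eta y ^ 2) (v := e)
    ?_ ?_ ?_ (fun y _ => (hB y).differentiableAt)
    (fun y _ => (hasFDerivAt_etasq y).differentiableAt)
  · simp only [hA, hBv] at key
    have h1 : ∫ y, f (x + r • y) * (-4 * (y i * eta y)) = -4 * ∫ y, f (x + r • y) * (y i * eta y) := by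
      rw [← integral_const_mul]; congr 1; ext y; ring
    have h2 : ∫ y, r * fderiv ℝ f (x + r • y) e * eta y ^ 2
        = r * ∫ y, fderiv ℝ f (x + r • y) e * eta y ^ 2 := by
      rw [← integral_const_mul]; congr 1; ext y; ring
    rw [h1, h2] at key
    linarith
  · simp only [hBv]
    exact Continuous.integrable_of_hasCompactSupport (by fun_prop) hcs2.mul_left
  · simp only [hA]
    refine Continuous.integrable_of_hasCompactSupport (by fun_prop) ?_
    have : HasCompactSupport fun y : EuclideanSpace ℝ (Fin n) => -4 * (y i * eta y) :=
      (hcs.mul_left (f := fun y => y i)).mul_left (f := fun _ => (-4:ℝ))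
    exact this.mul_left
  · exact Continuous.integrable_of_hasCompactSupport (by fun_prop) hcs2.mul_left

lemma sum_single_smul {n : ℕ} (L : EuclideanSpace ℝ (Fin n) →L[ℝ] ℝ) (y : EuclideanSpace ℝ (Fin n)) :
    L y = ∑ i, L (EuclideanSpace.single i (1:ℝ)) * y i := by
  conv_lhs => rw [← (EuclideanSpace.basisFun (Fin n) ℝ).sum_repr y]
  simp [map_sum, mul_comm]

lemma cs_eta {n : ℕ} : HasCompactSupport (eta (n := n)) :=
  HasCompactSupport.intro (isCompact_closedBall 0 1) fun y hy => eta_zero_of hy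

lemma cs_eta2 {n : ℕ} : HasCompactSupport (fun y : EuclideanSpace ℝ (Fin n) => eta y ^ 2) :=
  HasCompactSupport.intro (isCompact_closedBall 0 1) fun y hy => by simp [eta_zero_of hy]

lemma int_eta {n : ℕ} {g : EuclideanSpace ℝ (Fin n) → ℝ} (hg : Continuous g)
    (x : EuclideanSpace ℝ (Fin n)) (r : ℝ) :
    Integrable fun y : EuclideanSpace ℝ (Fin n) => g (x + r • y) * eta y := by
  have hec := eta_cont (n := n)
  exact Continuous.integrable_of_hasCompactSupport (by fun_prop) cs_eta.mul_left

lemma int_etai {n : ℕ} {g : EuclideanSpace ℝ (Fin n) → ℝ} (hg : Continuous g)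
    (x : EuclideanSpace ℝ (Fin n)) (r : ℝ) (i : Fin n) :
    Integrable fun y : EuclideanSpace ℝ (Fin n) => g (x + r • y) * (y i * eta y) := by
  have hec := eta_cont (n := n)
  have hc : Continuous fun y : EuclideanSpace ℝ (Fin n) => g (x + r • y) * (y i * eta y) := by
    fun_prop
  refine hc.integrable_of_hasCompactSupport ?_
  exact HasCompactSupport.intro (isCompact_closedBall 0 1) fun y hy => by
    rw [eta_zero_of hy, mul_zero, mul_zero]

lemma int_eta2 {n : ℕ} {g : EuclideanSpace ℝ (Fin n) → ℝ} (hg : Continuous g)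
    (x : EuclideanSpace ℝ (Fin n)) (r : ℝ) :
    Integrable fun y : EuclideanSpace ℝ (Fin n) => g (x + r • y) * eta y ^ 2 := by
  have hec := eta_cont (n := n)
  exact Continuous.integrable_of_hasCompactSupport (by fun_prop) cs_eta2.mul_left

lemma hasDerivAt_avg {n : ℕ} {v : EuclideanSpace ℝ (Fin n) → ℝ} (hv : ContDiff ℝ (⊤ : ℕ∞) v)
    (x : EuclideanSpace ℝ (Fin n)) (r : ℝ) :
    HasDerivAt (fun r : ℝ => ∫ y, v (x + r • y) * eta y)
      (r / 4 * ∫ y, lap n v (x + r • y) * eta y ^ 2) r := by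
  have hvc := hv.continuous
  have hec := eta_cont (n := n)
  have hd := (hv.fderiv_right (m := (⊤ : ℕ∞)) (by simp)).continuous
  have h1 := hasDerivAt_param (volume : Measure (EuclideanSpace ℝ (Fin n)))
    (isCompact_closedBall (0 : EuclideanSpace ℝ (Fin n)) 1)
    (F := fun r y => v (x + r • y) * eta y) (F' := fun r y => fderiv ℝ v (x + r • y) y * eta y)
    (by simp only [Function.uncurry_def]; fun_prop)
    (by simp only [Function.uncurry_def]
        refine Continuous.mul (Continuous.clm_apply ?_ ?_) ?_
        · exact hd.comp (by fun_prop)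
        · fun_prop
        · fun_prop)
    (fun s y => (hasDerivAt_line (diff_of_cd hv) x y s).mul_const _) r
  have e1 : ∀ (g : EuclideanSpace ℝ (Fin n) → ℝ),
      ∫ y in closedBall (0 : EuclideanSpace ℝ (Fin n)) 1, g y * eta y = ∫ y, g y * eta y :=
    fun g => setIntegral_eq_integral_of_forall_compl_eq_zero fun y hy => by simp [eta_zero_of hy]
  simp only [e1] at h1
  refine h1.congr_deriv ?_
  have hint : ∀ i, Integrable fun y : EuclideanSpace ℝ (Fin n) =>
      fderiv ℝ v (x + r • y) (EuclideanSpace.single i (1:ℝ)) * (y i * eta y) :=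
    fun i => int_etai (contDiff_pd hv _).continuous x r i
  have hint2 : ∀ i : Fin n, Integrable fun y : EuclideanSpace ℝ (Fin n) =>
      fderiv ℝ (fun y => fderiv ℝ v y (EuclideanSpace.single i (1:ℝ))) (x + r • y)
        (EuclideanSpace.single i (1:ℝ)) * eta y ^ 2 :=
    fun i => int_eta2 (contDiff_pd (contDiff_pd hv _) _).continuous x r
  have e2 : ∀ y, fderiv ℝ v (x + r • y) y * eta y =
      ∑ i, fderiv ℝ v (x + r • y) (EuclideanSpace.single i (1:ℝ)) * (y i * eta y) := by
    intro y
    rw [sum_single_smul (fderiv ℝ v (x + r • y)) y, Finset.sum_mul]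
    simp only [mul_assoc]
  simp only [e2]
  rw [integral_finsetSum _ fun i _ => hint i]
  have e3 := fun i => ibp_eta (contDiff_pd hv (EuclideanSpace.single i (1:ℝ))) x r i
  simp only [e3]
  rw [← Finset.mul_sum, ← integral_finsetSum _ fun i _ => hint2 i]
  simp only [lap, Finset.sum_mul]

lemma integral_eta_pos {n : ℕ} : 0 < ∫ y : EuclideanSpace ℝ (Fin n), eta y := by
  have hec := eta_cont (n := n)
  refine hec.integral_pos_of_hasCompactSupport_nonneg_nonzero cs_eta (fun y => eta_nonneg y)
    (x := 0) ?_
  simp [eta]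

lemma eta_shift {n : ℕ} (y c : EuclideanSpace ℝ (Fin n)) {δ : ℝ} (hδ : 0 < δ) (hc : ‖c‖ ≤ δ) :
    eta ((1 + δ) • y + c) ≤ (1 + δ) * eta y := by
  unfold eta
  refine max_le ?_ (mul_nonneg (by linarith) (le_max_right _ _))
  refine le_trans ?_ (mul_le_mul_of_nonneg_left (le_max_left _ _) (by linarith))
  set Y := (1 + δ) • y + c with hY
  have h1 : (1 + δ) * ‖y‖ ≤ ‖Y‖ + δ := by
    have : (1 + δ) • y = Y - c := by rw [hY]; abel
    calc (1 + δ) * ‖y‖ = ‖(1 + δ) • y‖ := by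
          rw [norm_smul, Real.norm_of_nonneg (by linarith)]
      _ ≤ ‖Y‖ + ‖c‖ := by rw [this]; exact norm_sub_le _ _
      _ ≤ _ := by linarith
  have h2 : ((1 + δ) * ‖y‖) ^ 2 ≤ (‖Y‖ + δ) ^ 2 := by
    have : 0 ≤ (1 + δ) * ‖y‖ := by positivity
    gcongr
  have h3 : (‖Y‖ + δ) ^ 2 ≤ (1 + δ) * (‖Y‖ ^ 2 + δ) := by
    nlinarith [mul_nonneg hδ.le (sq_nonneg (‖Y‖ - 1))]
  have h4 : (1 + δ) * ((1 + δ) * ‖y‖ ^ 2) ≤ (1 + δ) * (‖Y‖ ^ 2 + δ) := by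
    nlinarith
  have h5 := le_of_mul_le_mul_left h4 (by linarith)
  nlinarith

lemma harnack {n : ℕ} {v : EuclideanSpace ℝ (Fin n) → ℝ} (hv : ContDiff ℝ (⊤ : ℕ∞) v)
    {x p : EuclideanSpace ℝ (Fin n)} {δ w lam A : ℝ} (hδ : 0 < δ) (hw : 0 < w) (hl : 0 ≤ lam)
    (hA : 0 ≤ A) (hxp : ‖x - p‖ ≤ δ * w)
    (h0 : ∀ y, ‖y - p‖ ≤ (1 + δ) * w → 0 ≤ v y)
    (h1 : ∀ y, ‖y - p‖ ≤ (1 + δ) * w → -lam * v y ≤ lap n v y)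
    (h2 : ∀ y, ‖y - p‖ ≤ (1 + δ) * w → lap n v y ≤ lam * A) :
    v x ≤ (1 + δ) ^ (n + 1) * (Real.exp (lam * w ^ 2 / 8) *
      (v p + lam * A * ((1 + δ) * w) ^ 2 / 8)) := by
  set Z := ∫ y : EuclideanSpace ℝ (Fin n), eta y with hZ
  have hZpos : 0 < Z := integral_eta_pos
  have hvc := hv.continuous
  have hlc : Continuous (lap n v) := by
    unfold lap
    exact continuous_finsetSum _ fun i _ => (contDiff_pd (contDiff_pd hv _) _).continuous
  have hec := eta_cont (n := n)
  have hZint : Integrable (eta (n := n)) := hec.integrable_of_hasCompactSupport cs_eta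
  set Ix : ℝ → ℝ := fun r => ∫ y, v (x + r • y) * eta y with hIx
  set Ip : ℝ → ℝ := fun r => ∫ y, v (p + r • y) * eta y with hIp
  have hballx : ∀ r, 0 ≤ r → r ≤ w → ∀ y ∈ closedBall (0 : EuclideanSpace ℝ (Fin n)) 1,
      ‖x + r • y - p‖ ≤ (1 + δ) * w := by
    intro r hr hrw y hy
    have hy' : ‖y‖ ≤ 1 := by simpa using hy
    have : x + r • y - p = (x - p) + r • y := by abel
    rw [this]
    calc _ ≤ ‖x - p‖ + ‖r • y‖ := norm_add_le _ _
      _ ≤ δ * w + r * 1 := by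
        rw [norm_smul, Real.norm_of_nonneg hr]; gcongr
      _ ≤ _ := by linarith
  have hballp : ∀ r, 0 ≤ r → r ≤ (1 + δ) * w → ∀ y ∈ closedBall (0 : EuclideanSpace ℝ (Fin n)) 1,
      ‖p + r • y - p‖ ≤ (1 + δ) * w := by
    intro r hr hrw y hy
    have hy' : ‖y‖ ≤ 1 := by simpa using hy
    rw [add_sub_cancel_left, norm_smul, Real.norm_of_nonneg hr]
    nlinarith [norm_nonneg y]
  -- lower growth at x
  have hX : Z * v x ≤ Real.exp (lam * w ^ 2 / 8) * Ix w := by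
    have hmono : MonotoneOn (fun r => Real.exp (lam * r ^ 2 / 8) * Ix r) (Set.Icc 0 w) := by
      have hD : ∀ r, HasDerivAt (fun r => Real.exp (lam * r ^ 2 / 8) * Ix r)
          (Real.exp (lam * r ^ 2 / 8) * (lam * r / 4) * Ix r + Real.exp (lam * r ^ 2 / 8) *
          (r / 4 * ∫ y, lap n v (x + r • y) * eta y ^ 2)) r := by
        intro r
        have ha : HasDerivAt (fun r : ℝ => lam * r ^ 2 / 8) (lam * r / 4) r := by
          refine (((hasDerivAt_pow 2 r).const_mul lam).div_const 8).congr_deriv ?_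
          simp; ring
        exact ha.exp.mul (hasDerivAt_avg hv x r)
      refine monotoneOn_of_deriv_nonneg (convex_Icc 0 w) ?_ ?_ ?_
      · exact fun r _ => (hD r).continuousAt.continuousWithinAt
      · exact fun r _ => (hD r).differentiableAt.differentiableWithinAt
      · intro r hr
        rw [interior_Icc] at hr
        rw [(hD r).deriv]
        have hb : -(lam * Ix r) ≤ ∫ y, lap n v (x + r • y) * eta y ^ 2 := by
          rw [hIx]
          simp only
          rw [← integral_const_mul, ← integral_neg]
          refine integral_mono ((int_eta hvc x r).const_mul lam).neg (int_eta2 hlc x r) fun y => ?_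
          simp only
          by_cases hy : y ∈ closedBall (0 : EuclideanSpace ℝ (Fin n)) 1
          · have hb := hballx r hr.1.le hr.2.le y hy
            have a1 := h0 _ hb
            have a2 := h1 _ hb
            have a3 := eta_nonneg y
            have a4 := eta_le_one y
            have a5 : -lam * v (x + r • y) * eta y ^ 2 ≤ lap n v (x + r • y) * eta y ^ 2 :=
              mul_le_mul_of_nonneg_right a2 (sq_nonneg _)
            have a6 : lam * v (x + r • y) * eta y ^ 2 ≤ lam * v (x + r • y) * eta y :=
              mul_le_mul_of_nonneg_left (by nlinarith) (mul_nonneg hl a1)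
            nlinarith
          · simp [eta_zero_of hy]
        have he := Real.exp_pos (lam * r ^ 2 / 8)
        have : Real.exp (lam * r ^ 2 / 8) * (lam * r / 4) * Ix r + Real.exp (lam * r ^ 2 / 8) *
          (r / 4 * ∫ y, lap n v (x + r • y) * eta y ^ 2) = Real.exp (lam * r ^ 2 / 8) * (r / 4) *
            (lam * Ix r + ∫ y, lap n v (x + r • y) * eta y ^ 2) := by ring
        rw [this]
        have hr0 := hr.1
        refine mul_nonneg (by positivity) (by linarith)
    have := hmono (Set.left_mem_Icc.2 hw.le) (Set.right_mem_Icc.2 hw.le) hw.le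
    simp only at this
    have e0 : Ix 0 = Z * v x := by
      simp [hIx, integral_const_mul, hZ, mul_comm]
    rw [e0] at this
    simpa using this
  have hP : Ip ((1 + δ) * w) ≤ Z * (v p + lam * A * ((1 + δ) * w) ^ 2 / 8) := by
    have hW : 0 ≤ (1 + δ) * w := by positivity
    have hanti : AntitoneOn (fun r => Ip r - Z * lam * A * r ^ 2 / 8) (Set.Icc 0 ((1 + δ) * w)) := by
      have hD : ∀ r, HasDerivAt (fun r => Ip r - Z * lam * A * r ^ 2 / 8)
          ((r / 4 * ∫ y, lap n v (p + r • y) * eta y ^ 2) - Z * lam * A * r / 4) r := by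
        intro r
        have ha : HasDerivAt (fun r : ℝ => Z * lam * A * r ^ 2 / 8) (Z * lam * A * r / 4) r := by
          refine (((hasDerivAt_pow 2 r).const_mul (Z * lam * A)).div_const 8).congr_deriv ?_
          simp; ring
        exact (hasDerivAt_avg hv p r).sub ha
      refine antitoneOn_of_deriv_nonpos (convex_Icc 0 _) ?_ ?_ ?_
      · exact fun r _ => (hD r).continuousAt.continuousWithinAt
      · exact fun r _ => (hD r).differentiableAt.differentiableWithinAt
      · intro r hr
        rw [interior_Icc] at hr
        rw [(hD r).deriv]
        have hb : ∫ y, lap n v (p + r • y) * eta y ^ 2 ≤ lam * A * Z := by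
          rw [hZ, ← integral_const_mul]
          refine integral_mono (int_eta2 hlc p r) (hZint.const_mul _) fun y => ?_
          simp only
          by_cases hy : y ∈ closedBall (0 : EuclideanSpace ℝ (Fin n)) 1
          · have hb := hballp r hr.1.le hr.2.le y hy
            have a2 := h2 _ hb
            have a3 := eta_nonneg y
            have a4 := eta_le_one y
            have a5 : lap n v (p + r • y) * eta y ^ 2 ≤ lam * A * eta y ^ 2 :=
              mul_le_mul_of_nonneg_right a2 (sq_nonneg _)
            have a6 : lam * A * eta y ^ 2 ≤ lam * A * eta y :=
              mul_le_mul_of_nonneg_left (by nlinarith) (mul_nonneg hl hA)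
            linarith
          · simp [eta_zero_of hy]
        have hr0 := hr.1
        nlinarith
    have := hanti (Set.left_mem_Icc.2 hW) (Set.right_mem_Icc.2 hW) hW
    simp only at this
    have e0 : Ip 0 = Z * v p := by
      simp [hIp, integral_const_mul, hZ, mul_comm]
    rw [e0] at this
    nlinarith
  have hC : Ix w ≤ (1 + δ) ^ (n + 1) * Ip ((1 + δ) * w) := by
    have hw0 := hw.ne'
    have hd1 : (0:ℝ) < 1 + δ := by linarith
    set c := w⁻¹ • (p - x) with hc
    have hcn : ‖c‖ ≤ δ := by
      rw [hc, norm_smul, norm_inv, Real.norm_of_nonneg hw.le, norm_sub_rev, inv_mul_le_iff₀ hw]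
      linarith
    have e1 : Ix w = (1 + δ) ^ n * ∫ y, v (p + ((1 + δ) * w) • y) * eta ((1 + δ) • y + c) := by
      have s1 := integral_add_right_eq_self (μ := (volume : Measure (EuclideanSpace ℝ (Fin n))))
        (fun y => v (x + w • y) * eta y) c
      have s2 := Measure.integral_comp_smul (volume : Measure (EuclideanSpace ℝ (Fin n)))
        (fun y => v (x + w • (y + c)) * eta (y + c)) (1 + δ)
      rw [hIx]
      simp only
      rw [← s1]
      have s3 : ∀ y, v (x + w • ((1 + δ) • y + c)) = v (p + ((1 + δ) * w) • y) := by
        intro y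
        congr 1
        rw [hc, smul_add, smul_smul, smul_smul, mul_inv_cancel₀ hw0, mul_comm w, one_smul]
        abel
      simp only [s3] at s2
      rw [s2]
      simp only [finrank_euclideanSpace, Fintype.card_fin, smul_eq_mul]
      rw [abs_of_pos (by positivity), ← mul_assoc, mul_inv_cancel₀ (by positivity), one_mul]
    rw [e1, pow_succ, mul_assoc]
    refine mul_le_mul_of_nonneg_left ?_ (by positivity)
    rw [hIp]
    simp only
    rw [← integral_const_mul]
    refine integral_mono_of_nonneg ?_ ((int_eta hvc p _).const_mul _) ?_
    · refine Eventually.of_forall fun y => ?_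
      simp only [Pi.zero_apply]
      by_cases hy : y ∈ closedBall (0 : EuclideanSpace ℝ (Fin n)) 1
      · exact mul_nonneg (h0 _ (hballp _ (by positivity) le_rfl y hy)) (eta_nonneg _)
      · have := eta_shift y c hδ hcn
        rw [eta_zero_of hy, mul_zero] at this
        rw [le_antisymm this (eta_nonneg _), mul_zero]
    · refine Eventually.of_forall fun y => ?_
      simp only
      have := eta_shift y c hδ hcn
      by_cases hy : y ∈ closedBall (0 : EuclideanSpace ℝ (Fin n)) 1
      · have a := h0 _ (hballp _ (by positivity) le_rfl y hy)
        nlinarith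
      · rw [eta_zero_of hy, mul_zero] at this
        rw [le_antisymm this (eta_nonneg _), eta_zero_of hy]; simp
  have hfin : Z * v x ≤ Z * ((1 + δ) ^ (n + 1) * (Real.exp (lam * w ^ 2 / 8) *
      (v p + lam * A * ((1 + δ) * w) ^ 2 / 8))) := by
    have hd1 : (0:ℝ) < 1 + δ := by linarith
    calc Z * v x ≤ Real.exp (lam * w ^ 2 / 8) * Ix w := hX
      _ ≤ Real.exp (lam * w ^ 2 / 8) * ((1 + δ) ^ (n + 1) *
          (Z * (v p + lam * A * ((1 + δ) * w) ^ 2 / 8))) := by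
        refine mul_le_mul_of_nonneg_left (hC.trans ?_) (Real.exp_pos _).le
        exact mul_le_mul_of_nonneg_left hP (by positivity)
      _ = _ := by ring
  exact le_of_mul_le_mul_left hfin hZpos

lemma prod_abs_sub_factorial (N j : ℕ) (hj : j ≤ N) :
    ∏ i ∈ (Finset.range (N + 1)).erase j, |(j:ℝ) - i| = (j.factorial : ℝ) * (N - j).factorial := by
  have hsplit : (Finset.range (N + 1)).erase j = Finset.range j ∪ Finset.Ico (j + 1) (N + 1) := by
    ext i; simp; omega
  have hdis : Disjoint (Finset.range j) (Finset.Ico (j + 1) (N + 1)) := by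
    rw [Finset.disjoint_left]; intro i hi hi2; simp at hi hi2; omega
  rw [hsplit, Finset.prod_union hdis]
  congr 1
  · rw [← Finset.prod_range_add_one_eq_factorial, ← Finset.prod_range_reflect]
    push_cast
    refine Finset.prod_congr rfl fun i hi => ?_
    have hi' : i + 1 ≤ j := by simpa using hi
    have h2 : ((j - 1 - i : ℕ) : ℝ) = (j:ℝ) - (i + 1) := by
      rw [Nat.sub_sub, Nat.cast_sub (by omega)]; push_cast; ring
    rw [h2, show (j:ℝ) - ((j:ℝ) - (i + 1)) = i + 1 by ring, abs_of_nonneg (by positivity)]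
  · rw [← Finset.prod_range_add_one_eq_factorial, Finset.prod_Ico_eq_prod_range]
    push_cast
    refine Finset.prod_congr rfl fun i hi => ?_
    rw [show (j:ℝ) - ((j:ℝ) + 1 + i) = -(i + 1) by ring, abs_neg, abs_of_nonneg (by positivity)]

/-- point on the unit circle -/
def cis (t : ℝ) : ℂ := Complex.exp ((2 * π * t : ℝ) * Complex.I)

lemma cis_norm (t : ℝ) : ‖cis t‖ = 1 := Complex.norm_exp_ofReal_mul_I _

lemma cis_sub_norm (s t : ℝ) : ‖cis s - cis t‖ = 2 * |Real.sin (π * (s - t))| := by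
  have h1 : cis s = cis t * Complex.exp ((2 * π * (s - t) : ℝ) * Complex.I) := by
    rw [cis, cis, ← Complex.exp_add]; congr 1; push_cast; ring
  have h2 : cis s - cis t = cis t * (Complex.exp (Complex.I * (2 * π * (s - t) : ℝ)) - 1) := by
    rw [h1]; rw [mul_comm Complex.I]; ring
  rw [h2, norm_mul, cis_norm, one_mul, Complex.norm_exp_I_mul_ofReal_sub_one, norm_mul]
  simp only [Real.norm_eq_abs, abs_two]
  congr 3
  ring

lemma cis_sub_le (s t : ℝ) : ‖cis s - cis t‖ ≤ 2 * π * |s - t| := by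
  rw [cis_sub_norm]
  have := Real.abs_sin_le_abs (x := π * (s - t))
  rw [abs_mul, abs_of_pos Real.pi_pos] at this
  linarith

lemma le_cis_sub (s t : ℝ) (h : |s - t| ≤ 1 / 2) : 4 * |s - t| ≤ ‖cis s - cis t‖ := by
  rw [cis_sub_norm]
  have hp := Real.pi_pos
  have h1 := Real.mul_abs_le_abs_sin (x := π * (s - t))
    (by rw [abs_mul, abs_of_pos hp]; nlinarith)
  rw [abs_mul, abs_of_pos hp] at h1
  have : 2 / π * (π * |s - t|) = 2 * |s - t| := by field_simp
  linarith

lemma remez (N : ℕ) (hN : 0 < N) (P : Polynomial ℂ) (hP : P.natDegree ≤ N) (a h T M : ℝ)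
    (hh : 0 < h) (hT : 1 ≤ T) (hTh : T * h ≤ 1 / 4)
    (hM : ∀ t, |t - a| ≤ h → ‖P.eval (cis t)‖ ≤ M) (t : ℝ) (ht : |t - a| ≤ T * h) :
    ‖P.eval (cis t)‖ ≤ (5 * (T + 1)) ^ N * M := by
  have hNr : (0:ℝ) < N := by exact_mod_cast hN
  have hM0 : 0 ≤ M := (norm_nonneg _).trans (hM a (by simpa using hh.le))
  set u : ℕ → ℝ := fun j => a - h + 2 * h * j / N with hu
  have hud : ∀ i j : ℕ, |u i - u j| = 2 * h / N * |(i:ℝ) - j| := by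
    intro i j
    have : u i - u j = 2 * h / N * ((i:ℝ) - j) := by simp only [hu]; ring
    rw [this, abs_mul, abs_of_pos (by positivity)]
  have hua : ∀ i ∈ Finset.range (N + 1), |u i - a| ≤ h := by
    intro i hi
    have hi' : (i:ℝ) ≤ N := by
      have : i ≤ N := by simp at hi; omega
      exact_mod_cast this
    have : u i - a = h * (2 * i / N - 1) := by simp only [hu]; ring
    rw [this, abs_mul, abs_of_pos hh]
    have h0 : (0:ℝ) ≤ 2 * i / N := by positivity
    have h2 : 2 * (i:ℝ) / N ≤ 2 := by rw [div_le_iff₀ hNr]; linarith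
    have : |2 * (i:ℝ) / N - 1| ≤ 1 := by rw [abs_le]; constructor <;> linarith
    nlinarith
  have hij : ∀ i ∈ Finset.range (N + 1), ∀ j ∈ Finset.range (N + 1), |u i - u j| ≤ 1 / 2 := by
    intro i hi j hj
    have h1 := abs_le.1 (hua i hi)
    have h2 := abs_le.1 (hua j hj)
    rw [abs_le]
    constructor <;> nlinarith
  have hlow : ∀ i ∈ Finset.range (N + 1), ∀ j ∈ Finset.range (N + 1),
      8 * h / N * |(i:ℝ) - j| ≤ ‖cis (u i) - cis (u j)‖ := by
    intro i hi j hj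
    have := le_cis_sub _ _ (hij i hi j hj)
    rw [hud] at this
    calc _ = 4 * (2 * h / N * |(i:ℝ) - j|) := by ring
      _ ≤ _ := this
  have hinj : Set.InjOn (fun j => cis (u j)) (Finset.range (N + 1)) := by
    intro i hi j hj hEq
    have := hlow i hi j hj
    simp only at hEq
    rw [hEq, sub_self, norm_zero] at this
    have h3 : |(i:ℝ) - j| ≤ 0 := by
      by_contra hc; push Not at hc
      have : 0 < 8 * h / N * |(i:ℝ) - j| := by positivity
      linarith
    have h4 : (i:ℝ) - j = 0 := abs_eq_zero.1 (le_antisymm h3 (abs_nonneg _))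
    exact_mod_cast sub_eq_zero.1 h4
  have hdeg : P.degree < (Finset.range (N + 1)).card := by
    rw [Finset.card_range]
    refine lt_of_le_of_lt Polynomial.degree_le_natDegree ?_
    exact_mod_cast Nat.lt_succ_of_le hP
  have hint := Lagrange.eq_interpolate hinj hdeg
  set Q : ℝ := π * (T + 1) * N / 4 with hQ
  have hpi := Real.pi_pos
  have hbasis : ∀ j ∈ Finset.range (N + 1),
      ‖(Lagrange.basis (Finset.range (N + 1)) (fun j => cis (u j)) j).eval (cis t)‖
        ≤ Q ^ N / (j.factorial * (N - j).factorial) := by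
    intro j hj
    have hjN : j ≤ N := by simp at hj; omega
    rw [Lagrange.basis, Polynomial.eval_prod, norm_prod, ← prod_abs_sub_factorial N j hjN]
    have hcard : ((Finset.range (N + 1)).erase j).card = N := by
      rw [Finset.card_erase_of_mem hj]; simp
    have hQN : Q ^ N = ∏ _i ∈ (Finset.range (N + 1)).erase j, Q := by
      rw [Finset.prod_const, hcard]
    rw [hQN, ← Finset.prod_div_distrib]
    refine Finset.prod_le_prod (fun i _ => norm_nonneg _) fun i hi => ?_
    have hine : i ≠ j := Finset.ne_of_mem_erase hi
    have hir := Finset.mem_of_mem_erase hi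
    have habs : 0 < |(j:ℝ) - i| := by
      rw [abs_pos, sub_ne_zero]; exact_mod_cast hine.symm
    simp only [Lagrange.basisDivisor, Polynomial.eval_mul, Polynomial.eval_C, Polynomial.eval_sub,
      Polynomial.eval_X, norm_mul, norm_inv]
    have h1 := hlow j hj i hir
    have h2 : ‖cis t - cis (u i)‖ ≤ 2 * π * ((T + 1) * h) := by
      refine (cis_sub_le _ _).trans ?_
      refine mul_le_mul_of_nonneg_left ?_ (by positivity)
      calc |t - u i| = |(t - a) - (u i - a)| := by congr 1; ring
        _ ≤ |t - a| + |u i - a| := abs_sub _ _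
        _ ≤ T * h + h := add_le_add ht (hua i hir)
        _ = _ := by ring
    have h3 : 0 < 8 * h / N * |(j:ℝ) - i| := by positivity
    calc _ ≤ (8 * h / N * |(j:ℝ) - i|)⁻¹ * (2 * π * ((T + 1) * h)) := by
          gcongr
      _ = Q / |(j:ℝ) - i| := by
          rw [hQ]; field_simp; ring
  have hsum : ∑ j ∈ Finset.range (N + 1), Q ^ N / ((j.factorial:ℝ) * (N - j).factorial)
      = (2 * Q) ^ N / N.factorial := by
    have : ∀ j ∈ Finset.range (N + 1), Q ^ N / ((j.factorial:ℝ) * (N - j).factorial)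
        = Q ^ N / N.factorial * (N.choose j : ℝ) := by
      intro j hj
      have hjN : j ≤ N := by simp at hj; omega
      rw [Nat.cast_choose ℝ hjN]
      have := Nat.factorial_pos N
      have : (N.factorial : ℝ) ≠ 0 := by positivity
      field_simp
    rw [Finset.sum_congr rfl this, ← Finset.mul_sum]
    have h2 : ∑ j ∈ Finset.range (N + 1), (N.choose j : ℝ) = 2 ^ N := by
      exact_mod_cast Nat.sum_range_choose N
    rw [h2, mul_pow]; ring
  have hQb : (2 * Q) ^ N / N.factorial ≤ (5 * (T + 1)) ^ N := by
    have e1 : (2 * Q) ^ N / N.factorial = (π * (T + 1) / 2) ^ N * ((N:ℝ) ^ N / N.factorial) := by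
      rw [show 2 * Q = π * (T + 1) / 2 * N by rw [hQ]; ring, mul_pow, mul_div_assoc]
    rw [e1]
    have e2 := Real.pow_div_factorial_le_exp (N:ℝ) hNr.le N
    have e3 : Real.exp (N:ℝ) = (Real.exp 1) ^ N := by rw [← Real.exp_nat_mul]; simp
    rw [e3] at e2
    calc _ ≤ (π * (T + 1) / 2) ^ N * (Real.exp 1) ^ N := by gcongr
      _ = (π * (T + 1) / 2 * Real.exp 1) ^ N := by rw [mul_pow]
      _ ≤ _ := by
        have a1 := Real.pi_lt_d2
        have a2 := Real.exp_one_lt_d9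
        have a3 := Real.exp_pos 1
        have : π * Real.exp 1 ≤ 10 := by nlinarith
        refine pow_le_pow_left₀ (by positivity) ?_ N
        nlinarith
  conv_lhs => rw [hint]
  rw [Lagrange.interpolate_apply, Polynomial.eval_finsetSum]
  refine (norm_sum_le _ _).trans ?_
  calc _ ≤ ∑ j ∈ Finset.range (N + 1), M * (Q ^ N / ((j.factorial:ℝ) * (N - j).factorial)) := by
        refine Finset.sum_le_sum fun j hj => ?_
        rw [Polynomial.eval_mul, Polynomial.eval_C, norm_mul]
        exact mul_le_mul (hM _ (hua j hj)) (hbasis j hj) (norm_nonneg _) hM0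
    _ = M * ((2 * Q) ^ N / N.factorial) := by rw [← Finset.mul_sum, hsum]
    _ ≤ M * (5 * (T + 1)) ^ N := by gcongr
    _ = _ := mul_comm _ _

lemma trig_poly {f : ℝ → ℝ} (hf : Continuous f) (hper : ∀ t, f (t + 1) = f t) (D : ℕ)
    (hc : ∀ k : ℤ, D < k.natAbs → ∫ t in (0:ℝ)..1, f t * Real.cos (2 * π * k * t) = 0)
    (hs : ∀ k : ℤ, D < k.natAbs → ∫ t in (0:ℝ)..1, f t * Real.sin (2 * π * k * t) = 0) :
    ∃ P : Polynomial ℂ, P.natDegree ≤ 2 * D ∧ ∀ t, ‖P.eval (cis t)‖ = |f t| := by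
  have : Fact ((0:ℝ) < 1) := ⟨one_pos⟩
  have hperC : Function.Periodic (fun t => (f t : ℂ)) (1:ℝ) := fun t => by simp [hper t]
  have hcontL : Continuous (hperC.lift) :=
    continuous_coinduced_dom.mpr (by
      show Continuous fun t => (f t : ℂ)
      fun_prop)
  let F : C(AddCircle (1:ℝ), ℂ) := ⟨hperC.lift, hcontL⟩
  have hF : ∀ t : ℝ, F (t : AddCircle (1:ℝ)) = f t := fun t => hperC.lift_coe t
  have hcoef : ∀ k : ℤ, D < k.natAbs → fourierCoeff F k = 0 := by
    intro k hk
    rw [fourierCoeff_eq_intervalIntegral F k 0]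
    have e : ∀ t : ℝ, fourier (-k) (t : AddCircle (1:ℝ)) • F (t : AddCircle (1:ℝ))
        = ((f t * Real.cos (2 * π * k * t) : ℝ) : ℂ)
          - ((f t * Real.sin (2 * π * k * t) : ℝ) : ℂ) * Complex.I := by
      intro t
      rw [hF, fourier_coe_apply]
      have : (2 * (π:ℂ) * Complex.I * ((-k : ℤ) : ℂ) * (t:ℂ) / ((1:ℝ):ℂ))
          = ((-(2 * π * k * t) : ℝ) : ℂ) * Complex.I := by push_cast; ring
      rw [this, Complex.exp_mul_I, ← Complex.ofReal_cos, ← Complex.ofReal_sin, Real.cos_neg,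
        Real.sin_neg, smul_eq_mul]
      push_cast; ring
    simp only [e]
    rw [intervalIntegral.integral_sub, intervalIntegral.integral_mul_const,
      intervalIntegral.integral_ofReal, intervalIntegral.integral_ofReal]
    · simp only [zero_add, hc k hk, hs k hk]; simp
    · exact Continuous.intervalIntegrable (by fun_prop) _ _
    · exact Continuous.intervalIntegrable (by fun_prop) _ _
  have hzero : ∀ k ∉ Finset.Icc (-(D:ℤ)) D, fourierCoeff F k = 0 := by
    intro k hk
    apply hcoef
    simp at hk
    omega
  have hsumm : Summable (fourierCoeff F) := summable_of_ne_finset_zero hzero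
  refine ⟨∑ k ∈ Finset.Icc (-(D:ℤ)) D, Polynomial.C (fourierCoeff F k) *
    Polynomial.X ^ (k + D).toNat, ?_, ?_⟩
  · refine Polynomial.natDegree_sum_le_of_forall_le _ _ fun k hk => ?_
    refine (Polynomial.natDegree_C_mul_X_pow_le _ _).trans ?_
    simp at hk; omega
  · intro t
    have h1 := has_pointwise_sum_fourier_series_of_summable hsumm (t : AddCircle (1:ℝ))
    have h2 : HasSum (fun i => fourierCoeff F i • fourier i (t : AddCircle (1:ℝ)))
        (∑ k ∈ Finset.Icc (-(D:ℤ)) D, fourierCoeff F k • fourier k (t : AddCircle (1:ℝ))) :=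
      hasSum_sum_of_ne_finset_zero fun k hk => by rw [hzero k hk, zero_smul]
    have h3 := h1.unique h2
    rw [hF] at h3
    have h4 : |f t| = ‖cis t ^ D * (f t : ℂ)‖ := by
      rw [norm_mul, norm_pow, cis_norm]; simp
    rw [h4, h3, Polynomial.eval_finsetSum, Finset.mul_sum]
    congr 1
    refine Finset.sum_congr rfl fun k hk => ?_
    have hk' : 0 ≤ k + D := by simp at hk; omega
    rw [Polynomial.eval_mul, Polynomial.eval_C, Polynomial.eval_pow, Polynomial.eval_X,
      fourier_coe_apply, smul_eq_mul]
    have e1 : cis t ^ (k + (D:ℤ)).toNat = cis t ^ (k + (D:ℤ)) := by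
      rw [← zpow_natCast, Int.toNat_of_nonneg hk']
    have hne : cis t ≠ 0 := Complex.exp_ne_zero _
    rw [e1, zpow_add₀ hne, zpow_natCast]
    have e2 : cis t ^ k = Complex.exp (2 * π * Complex.I * k * t / (1:ℝ)) := by
      rw [cis, ← Complex.exp_int_mul]; congr 1; push_cast; ring
    rw [e2]; ring

lemma per_rep {n : ℕ} {f : EuclideanSpace ℝ (Fin n) → ℝ} (hf : ZnPeriodic n f)
    (x c : EuclideanSpace ℝ (Fin n)) :
    ∃ y, ‖y - c‖ ≤ √n ∧ f y = f x := by
  refine ⟨WithLp.toLp 2 fun i => x i + ((-⌊x i - c i⌋ : ℤ) : ℝ), ?_, hf x fun i => -⌊x i - c i⌋⟩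
  rw [EuclideanSpace.norm_eq]
  apply Real.sqrt_le_sqrt
  calc _ ≤ ∑ i : Fin n, (1:ℝ) := by
        refine Finset.sum_le_sum fun i _ => ?_
        have e : (WithLp.toLp 2 (fun i => x i + ((-⌊x i - c i⌋ : ℤ) : ℝ)) - c :
          EuclideanSpace ℝ (Fin n)) i = Int.fract (x i - c i) := by
          rw [← Int.self_sub_floor]
          simp only [PiLp.sub_apply]; push_cast; ring
        rw [e, Real.norm_of_nonneg (Int.fract_nonneg _)]
        exact pow_le_one₀ (Int.fract_nonneg _) (Int.fract_lt_one _).le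
    _ = n := by simp

lemma per_max {n : ℕ} {f : EuclideanSpace ℝ (Fin n) → ℝ} (hf : ZnPeriodic n f)
    (hc : Continuous f) : ∃ y, ∀ x, f x ≤ f y := by
  obtain ⟨y, -, hy⟩ := (isCompact_closedBall (0 : EuclideanSpace ℝ (Fin n)) (√n)).exists_isMaxOn
    ⟨0, by simp⟩ hc.continuousOn
  refine ⟨y, fun x => ?_⟩
  obtain ⟨z, hz, hzx⟩ := per_rep hf x 0
  rw [← hzx]
  exact hy (by simpa using hz)

lemma per_single {n : ℕ} {f : EuclideanSpace ℝ (Fin n) → ℝ} (hf : ZnPeriodic n f)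
    (x : EuclideanSpace ℝ (Fin n)) (i : Fin n) :
    f (x + EuclideanSpace.single i (1:ℝ)) = f x := by
  rw [← hf x (fun j => if j = i then 1 else 0)]
  congr 1
  ext j
  by_cases h : j = i <;> simp [h]

lemma coef_nonpos {n : ℕ} {ψ : EuclideanSpace ℝ (Fin n) → ℝ} {lam ω : ℝ}
    (hψ : ContDiff ℝ (⊤ : ℕ∞) ψ) (hper : ZnPeriodic n ψ)
    (hlap : ∀ x, lap n ψ x = -lam * ψ x) (i : Fin n) (hω : lam < ω ^ 2)
    {q q1 : ℝ → ℝ} (hq : ∀ t, HasDerivAt q (q1 t) t)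
    (hq1 : ∀ t, HasDerivAt q1 (-ω ^ 2 * q t) t) (hq0 : q 1 = q 0) (hq10 : q1 1 = q1 0)
    (x : EuclideanSpace ℝ (Fin n)) :
    ∫ t in (0:ℝ)..1, ψ (x + t • EuclideanSpace.single i (1:ℝ)) * q t ≤ 0 := by
  have hqc : Continuous q := continuous_iff_continuousAt.2 fun t => (hq t).continuousAt
  have hq1c : Continuous q1 := continuous_iff_continuousAt.2 fun t => (hq1 t).continuousAt
  have hψc := hψ.continuous
  set e : Fin n → EuclideanSpace ℝ (Fin n) := fun j => EuclideanSpace.single j (1:ℝ) with he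
  change ∫ t in (0:ℝ)..1, ψ (x + t • e i) * q t ≤ 0
  have hI : ∀ G : ℝ → ℝ, ∫ t in (0:ℝ)..1, G t = ∫ t in Set.Icc (0:ℝ) 1, G t := fun G => by
    rw [intervalIntegral.integral_of_le zero_le_one, integral_Icc_eq_integral_Ioc]
  set c : EuclideanSpace ℝ (Fin n) → ℝ := fun x => ∫ t in (0:ℝ)..1, ψ (x + t • e i) * q t with hc
  have hcc : Continuous c := by
    apply intervalIntegral.continuous_parametric_intervalIntegral_of_continuous'
    simp only [Function.uncurry_def]; fun_prop
  have hcp : ZnPeriodic n c := by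
    intro x v
    simp only [hc]
    congr 1
    ext t
    rw [← hper (x + t • e i) v]
    congr 2
    ext j; simp; ring
  obtain ⟨y, hy⟩ := per_max hcp hcc
  have hd : ∀ (g : EuclideanSpace ℝ (Fin n) → ℝ), ContDiff ℝ (⊤ : ℕ∞) g → ∀ j s,
      HasDerivAt (fun s : ℝ => ∫ t in (0:ℝ)..1, g (y + s • e j + t • e i) * q t)
        (∫ t in (0:ℝ)..1, fderiv ℝ g (y + s • e j + t • e i) (e j) * q t) s := by
    intro g hg j s
    have hgc := hg.continuous
    have hgd := (contDiff_pd hg (e j)).continuous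
    simp only [hI]
    refine hasDerivAt_param volume isCompact_Icc
      (F := fun s t => g (y + s • e j + t • e i) * q t)
      (F' := fun s t => fderiv ℝ g (y + s • e j + t • e i) (e j) * q t) ?_ ?_ ?_ s
    · simp only [Function.uncurry_def]; fun_prop
    · simp only [Function.uncurry_def]
      exact (hgd.comp (by fun_prop : Continuous fun p : ℝ × ℝ => y + p.1 • e j + p.2 • e i)).mul
        (by fun_prop)
    · intro s t
      have := hasDerivAt_line (diff_of_cd hg) (y + t • e i) (e j) s
      have e1 : ∀ s : ℝ, y + s • e j + t • e i = y + t • e i + s • e j := fun s => by abel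
      simp only [e1]
      exact this.mul_const _
  set a : Fin n → ℝ := fun j => ∫ t in (0:ℝ)..1,
    fderiv ℝ (fun z => fderiv ℝ ψ z (e j)) (y + t • e i) (e j) * q t with ha
  have hL : HasLap c y a := by
    intro j
    refine ⟨_, Eventually.of_forall fun s => hd ψ hψ j s, ?_⟩
    have := hd _ (contDiff_pd hψ (e j)) j 0
    simpa [ha] using this
  have hle : ∀ j, a j ≤ 0 := fun j => hL.nonpos (Eventually.of_forall hy) j
  have hcont : ∀ j, Continuous fun t : ℝ =>
      fderiv ℝ (fun z => fderiv ℝ ψ z (e j)) (y + t • e i) (e j) * q t := fun j =>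
    ((contDiff_pd (contDiff_pd hψ (e j)) (e j)).continuous.comp (by fun_prop)).mul hqc
  have hsum : ∑ j, a j = -lam * c y := by
    simp only [ha, hc]
    rw [← intervalIntegral.integral_finsetSum fun j _ => (hcont j).intervalIntegrable _ _,
      ← intervalIntegral.integral_const_mul]
    congr 1; ext t
    rw [← Finset.sum_mul]
    have := hlap (y + t • e i)
    simp only [lap] at this
    rw [this]; ring
  have hai : a i = -ω ^ 2 * c y := by
    have h1 : ∀ t : ℝ, HasDerivAt (fun t : ℝ => fderiv ℝ ψ (y + t • e i) (e i) * q t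
        - ψ (y + t • e i) * q1 t)
        (fderiv ℝ (fun z => fderiv ℝ ψ z (e i)) (y + t • e i) (e i) * q t
          - ψ (y + t • e i) * (-ω ^ 2 * q t)) t := by
      intro t
      have h2 := (hasDerivAt_line (diff_of_cd (contDiff_pd hψ (e i))) y (e i) t).mul (hq t)
      have h3 := (hasDerivAt_line (diff_of_cd hψ) y (e i) t).mul (hq1 t)
      refine (h2.sub h3).congr_deriv ?_
      ring
    have h4 := intervalIntegral.integral_eq_sub_of_hasDerivAt (a := 0) (b := 1)
      (fun t _ => h1 t) (Continuous.intervalIntegrable (((hcont i)).sub (by fun_prop)) _ _)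
    have h5 : fderiv ℝ ψ (y + e i) = fderiv ℝ ψ y := by
      rw [← fderiv_comp_add_right]
      congr 1
      ext z; exact per_single hper z i
    have h6 : ψ (y + e i) = ψ y := per_single hper y i
    rw [intervalIntegral.integral_sub ((hcont i).intervalIntegrable _ _)
      (Continuous.intervalIntegrable (by fun_prop) _ _)] at h4
    simp only [one_smul, zero_smul, add_zero, h5, h6, hq0, hq10, sub_self] at h4
    have h7 : ∫ t in (0:ℝ)..1, ψ (y + t • e i) * (-ω ^ 2 * q t) = -ω ^ 2 * c y := by
      simp only [hc]
      rw [← intervalIntegral.integral_const_mul]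
      congr 1; ext t; ring
    simp only [ha]; linarith
  have h8 : ∑ j, a j ≤ a i := by
    rw [← Finset.add_sum_erase _ _ (Finset.mem_univ i)]
    have : ∑ j ∈ Finset.univ.erase i, a j ≤ 0 := Finset.sum_nonpos fun j _ => hle j
    linarith
  refine (hy x).trans ?_
  rw [hsum, hai] at h8
  nlinarith

lemma line_poly {n : ℕ} {ψ : EuclideanSpace ℝ (Fin n) → ℝ} {lam : ℝ}
    (hψ : ContDiff ℝ (⊤ : ℕ∞) ψ) (hper : ZnPeriodic n ψ)
    (hlap : ∀ x, lap n ψ x = -lam * ψ x) (i : Fin n) (x : EuclideanSpace ℝ (Fin n)) (D : ℕ)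
    (hD : lam ≤ (D:ℝ) ^ 2) :
    ∃ P : Polynomial ℂ, P.natDegree ≤ 2 * D ∧
      ∀ t, ‖P.eval (cis t)‖ = |ψ (x + t • EuclideanSpace.single i (1:ℝ))| := by
  have hψc := hψ.continuous
  have hω : ∀ k : ℤ, D < k.natAbs → lam < (2 * π * k) ^ 2 := by
    intro k hk
    have h1 : (D:ℝ) ^ 2 < (k:ℝ) ^ 2 := by
      rw [← sq_abs (k:ℝ)]
      have : (D:ℝ) < |(k:ℝ)| := by
        rw [← Int.cast_abs, ← Int.natCast_natAbs]; exact_mod_cast hk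
      have h0 : (0:ℝ) ≤ D := by positivity
      nlinarith
    have h2 : (k:ℝ) ^ 2 ≤ (2 * π * k) ^ 2 := by
      have : (1:ℝ) ≤ (2 * π) ^ 2 := by nlinarith [Real.pi_gt_three]
      rw [mul_pow]; nlinarith [sq_nonneg (k:ℝ)]
    linarith
  have hk1 : ∀ k : ℤ, cos (2 * π * k * 1) = cos (2 * π * k * 0) := fun k => by
    rw [mul_one, mul_zero, cos_zero, mul_comm (2 * π)]; exact Real.cos_int_mul_two_pi k
  have hk2 : ∀ k : ℤ, sin (2 * π * k * 1) = sin (2 * π * k * 0) := fun k => by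
    have := Real.sin_int_mul_pi (2 * k)
    rw [mul_one, mul_zero, sin_zero, ← this]; push_cast; congr 1; ring
  have hdl : ∀ (w t : ℝ), HasDerivAt (fun t : ℝ => w * t) w t := fun w t => by
    simpa using (hasDerivAt_id t).const_mul w
  have hdc : ∀ (w t : ℝ), HasDerivAt (fun t : ℝ => cos (w * t)) (-(w * sin (w * t))) t :=
    fun w t => (hdl w t).cos.congr_deriv (by ring)
  have hds : ∀ (w t : ℝ), HasDerivAt (fun t : ℝ => sin (w * t)) (w * cos (w * t)) t :=
    fun w t => (hdl w t).sin.congr_deriv (by ring)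
  refine trig_poly (f := fun t => ψ (x + t • EuclideanSpace.single i (1:ℝ))) (by fun_prop) ?_ D
    ?_ ?_
  · intro t
    rw [add_smul, one_smul, ← add_assoc]; exact per_single hper _ i
  · intro k hk
    set w := 2 * π * (k:ℝ) with hw
    apply le_antisymm
    · refine coef_nonpos hψ hper hlap i (hω k hk) (q1 := fun t => -(w * sin (w * t)))
        (hdc w) (fun t => ?_) (hk1 k) (by simp only [hw, hk2]) x
      exact ((hds w t).const_mul w).neg.congr_deriv (by ring)
    · have := coef_nonpos hψ hper hlap i (hω k hk) (q := fun t => -cos (w * t))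
        (q1 := fun t => (w * sin (w * t)))
        (fun t => (hdc w t).neg.congr_deriv (by ring)) (fun t => ?_) (by simp only [hw, hk1])
        (by simp only [hw, hk2]) x
      · simp only [mul_neg, intervalIntegral.integral_neg] at this
        linarith
      · exact ((hds w t).const_mul w).congr_deriv (by ring)
  · intro k hk
    set w := 2 * π * (k:ℝ) with hw
    apply le_antisymm
    · refine coef_nonpos hψ hper hlap i (hω k hk) (q1 := fun t => (w * cos (w * t)))
        (hds w) (fun t => ?_) (hk2 k) (by simp only [hw, hk1]) x
      exact ((hdc w t).const_mul w).congr_deriv (by ring)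
    · have := coef_nonpos hψ hper hlap i (hω k hk) (q := fun t => -sin (w * t))
        (q1 := fun t => -(w * cos (w * t)))
        (fun t => (hds w t).neg) (fun t => ?_) (by simp only [hw, hk2])
        (by simp only [hw, hk1]) x
      · simp only [mul_neg, intervalIntegral.integral_neg] at this
        linarith
      · exact ((hdc w t).const_mul w).neg.congr_deriv (by ring)

lemma doubling_cube {n : ℕ} {ψ : EuclideanSpace ℝ (Fin n) → ℝ} {lam : ℝ}
    (hψ : ContDiff ℝ (⊤ : ℕ∞) ψ) (hper : ZnPeriodic n ψ)
    (hlap : ∀ x, lap n ψ x = -lam * ψ x) (D : ℕ) (hD0 : 0 < D)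
    (hD : lam ≤ (D:ℝ) ^ 2) (z : EuclideanSpace ℝ (Fin n)) {h T M : ℝ} (hh : 0 < h)
    (hT : 1 ≤ T) (hTh : T * h ≤ 1 / 4) (hM : ∀ x, (∀ i, |x i - z i| ≤ h) → |ψ x| ≤ M) (k : ℕ) :
    ∀ x, (∀ i : Fin n, (i : ℕ) < k → |x i - z i| ≤ T * h) →
      (∀ i : Fin n, k ≤ (i : ℕ) → |x i - z i| ≤ h) →
      |ψ x| ≤ ((5 * (T + 1)) ^ (2 * D)) ^ k * M := by
  induction k with
  | zero =>
    intro x _ hx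
    simpa using hM x fun i => hx i (Nat.zero_le _)
  | succ k ih =>
    intro x hx1 hx2
    by_cases hk : k < n
    · set i : Fin n := ⟨k, hk⟩ with hi
      obtain ⟨P, hP, hPe⟩ := line_poly hψ hper hlap i x D hD
      have hxi := hx1 i (by simp [hi])
      have key := remez (2 * D) (by omega) P hP (z i - x i) h T
        (((5 * (T + 1)) ^ (2 * D)) ^ k * M) hh hT hTh (fun t ht => ?_) 0 (by
          simpa using hxi)
      · rw [hPe] at key
        simp only [zero_smul, add_zero] at key
        rw [pow_succ']
        linarith
      · rw [hPe]
        apply ih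
        · intro j hj
          have hne : j ≠ i := fun h => by rw [h, hi] at hj; simp at hj
          simpa [hne] using hx1 j (by omega)
        · intro j hj
          by_cases hne : j = i
          · rw [hne]
            simp
            rw [show x i + t - z i = t - (z i - x i) by ring]; exact ht
          · have : k ≠ (j:ℕ) := fun h => hne (by rw [hi]; ext; simp [h])
            simpa [hne] using hx2 j (by omega)
    · have := ih x (fun i hi => hx1 i (by omega)) (fun i hi => absurd i.2 (by omega))
      have hM0 : 0 ≤ M := (abs_nonneg _).trans (hM z (fun i => by simpa using hh.le))
      refine this.trans ?_
      gcongr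
      · exact one_le_pow₀ (by linarith)
      · omega

lemma norm_le_of_cube {n : ℕ} {y : EuclideanSpace ℝ (Fin n)} {h : ℝ} (hh : 0 ≤ h)
    (hy : ∀ i, |y i| ≤ h) : ‖y‖ ≤ n * h := by
  rw [EuclideanSpace.norm_eq]
  apply Real.sqrt_le_iff.2 ⟨by positivity, ?_⟩
  calc ∑ i, ‖y i‖ ^ 2 ≤ ∑ i : Fin n, h ^ 2 := by
        refine Finset.sum_le_sum fun i _ => ?_
        rw [Real.norm_eq_abs]
        exact pow_le_pow_left₀ (abs_nonneg _) (hy i) 2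
    _ = n * h ^ 2 := by simp
    _ ≤ (n * h) ^ 2 := by
        rw [mul_pow]
        have : (n:ℝ) ≤ (n:ℝ) ^ 2 := by exact_mod_cast Nat.le_self_pow (by norm_num) n
        gcongr

lemma doubling {n : ℕ} (hn : 0 < n) {ψ : EuclideanSpace ℝ (Fin n) → ℝ} {lam : ℝ}
    (hψ : ContDiff ℝ (⊤ : ℕ∞) ψ) (hper : ZnPeriodic n ψ)
    (hlap : ∀ x, lap n ψ x = -lam * ψ x) (D : ℕ) (hD0 : 0 < D)
    (hD : lam ≤ (D:ℝ) ^ 2) (z : EuclideanSpace ℝ (Fin n)) {d M : ℝ} (hd : 0 < d)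
    (hd4 : d ≤ 1 / 4) (hM : ∀ x, ‖x - z‖ ≤ d / 4 → |ψ x| ≤ M) (x : EuclideanSpace ℝ (Fin n))
    (hx : ‖x - z‖ ≤ d) :
    |ψ x| ≤ ((5 * (4 * n + 1)) ^ (2 * D)) ^ n * M := by
  have hn' : (0:ℝ) < n := by exact_mod_cast hn
  have hn1 : (1:ℝ) ≤ n := by exact_mod_cast hn
  have e : 4 * (n:ℝ) * (d / (4 * n)) = d := by field_simp
  refine doubling_cube hψ hper hlap D hD0 hD z (h := d / (4 * n)) (T := 4 * n) (by positivity)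
    (by linarith) (by rw [e]; exact hd4) (fun y hy => hM y ?_) n x ?_ ?_
  · refine (norm_le_of_cube (h := d / (4 * n)) (by positivity) (by simpa using hy)).trans ?_
    apply le_of_eq; field_simp
  · intro i _
    rw [e]
    have := PiLp.norm_apply_le (x - z) i
    rw [Real.norm_eq_abs] at this
    simpa using this.trans hx
  · intro i hi; exact absurd i.2 (by omega)

lemma blocks (M : ℕ → ℝ) (hmono : ∀ i, M i ≤ M (i + 1)) (h0 : 0 < M 0) (K L B : ℕ) (hL : 0 < L)
    (hB : M (2 * K * L) ≤ 2 ^ B * M 0) (hKL : 2 * B ≤ K * L) :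
    ∃ G : Finset ℕ, G ⊆ Finset.range K ∧ K ≤ 2 * G.card ∧ ∃ j : ℕ → ℕ, ∀ b ∈ G, j b < L ∧
      M (2 * L * b + j b + 1) ≤ 2 * M (2 * L * b + j b) := by
  classical
  have hgrow : ∀ k, 2 ^ ((Finset.range k).filter fun i => 2 * M i < M (i + 1)).card * M 0 ≤ M k := by
    intro k
    induction k with
    | zero => simp
    | succ k ih =>
      rw [Finset.range_add_one, Finset.filter_insert]
      split_ifs with h
      · rw [Finset.card_insert_of_notMem (by simp), pow_succ]
        nlinarith
      · exact ih.trans (hmono k)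
  set bad := (Finset.range (2 * K * L)).filter fun i => 2 * M i < M (i + 1) with hbad
  have hcard : bad.card ≤ B := by
    by_contra hc
    push Not at hc
    have h1 := (hgrow (2 * K * L)).trans hB
    have h2 := le_of_mul_le_mul_right h1 h0
    have h3 : (2:ℝ) ^ B < 2 ^ bad.card := pow_lt_pow_right₀ (by norm_num) hc
    linarith
  set G := (Finset.range K).filter fun b => ∃ j < L,
    M (2 * L * b + j + 1) ≤ 2 * M (2 * L * b + j) with hG
  refine ⟨G, Finset.filter_subset _ _, ?_, ?_⟩
  · set Gc := (Finset.range K).filter fun b => ¬ ∃ j < L,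
      M (2 * L * b + j + 1) ≤ 2 * M (2 * L * b + j) with hGc
    have hs : G.card + Gc.card = K := by
      rw [hG, hGc, Finset.card_filter_add_card_filter_not, Finset.card_range]
    have h4 : (Gc ×ˢ Finset.range L).card ≤ bad.card := by
      refine Finset.card_le_card_of_injOn (fun p => 2 * L * p.1 + p.2) ?_ ?_
      · rintro ⟨b, j⟩ hp
        simp only [hGc, Finset.coe_product, Set.mem_prod, Finset.mem_coe, Finset.mem_filter,
          Finset.mem_range, not_exists, not_and, not_le] at hp
        simp only [hbad, Finset.mem_coe, Finset.mem_filter, Finset.mem_range]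
        refine ⟨?_, hp.1.2 j hp.2⟩
        have h5 : 2 * L * (b + 1) ≤ 2 * L * K := Nat.mul_le_mul_left _ hp.1.1
        have h6 : 2 * L * (b + 1) = 2 * L * b + 2 * L := by ring
        have h7 : 2 * K * L = 2 * L * K := by ring
        have := hp.2
        omega
      · rintro ⟨b, j⟩ hp ⟨b', j'⟩ hp' h
        simp only [Finset.coe_product, Set.mem_prod, Finset.mem_coe, Finset.mem_range] at hp hp' h
        have hj := hp.2
        have hj' := hp'.2
        have h5 : (2 * L * b + j) / (2 * L) = b := by
          rw [Nat.mul_add_div (by omega), Nat.div_eq_of_lt (by omega), add_zero]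
        have h6 : (2 * L * b' + j') / (2 * L) = b' := by
          rw [Nat.mul_add_div (by omega), Nat.div_eq_of_lt (by omega), add_zero]
        have h7 : b = b' := by rw [← h5, h, h6]
        subst h7
        simp; omega
    rw [Finset.card_product, Finset.card_range] at h4
    have h8 : 2 * Gc.card * L ≤ K * L := by nlinarith
    have h9 := Nat.le_of_mul_le_mul_right h8 hL
    omega
  · have : ∀ b, ∃ j, b ∈ G → j < L ∧ M (2 * L * b + j + 1) ≤ 2 * M (2 * L * b + j) := by
      intro b
      by_cases hb : b ∈ G
      · have := (Finset.mem_filter.1 hb).2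
        obtain ⟨j, hj⟩ := this
        exact ⟨j, fun _ => hj⟩
      · exact ⟨0, fun h => absurd h hb⟩
    choose j hj using this
    exact ⟨j, hj⟩

lemma lap_add_const {n : ℕ} (ψ : EuclideanSpace ℝ (Fin n) → ℝ) (c : ℝ)
    (x : EuclideanSpace ℝ (Fin n)) : lap n (fun x => ψ x + c) x = lap n ψ x := by
  simp [lap, fderiv_add_const]

lemma exp_le_aux {t s : ℝ} (ht : t ≤ s) (hs : s < 1) : Real.exp t ≤ 1 / (1 - s) := by
  have h1 := Real.add_one_le_exp (-s)
  have h2 : Real.exp t ≤ Real.exp s := Real.exp_le_exp.2 ht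
  have h3 : Real.exp s * Real.exp (-s) = 1 := by rw [← Real.exp_add]; simp
  rw [le_div_iff₀ (by linarith)]
  have h4 := Real.exp_pos s
  nlinarith [Real.exp_pos t]

lemma local_bound {n : ℕ} {ψ : EuclideanSpace ℝ (Fin n) → ℝ} {lam : ℝ}
    (hψ : ContDiff ℝ (⊤ : ℕ∞) ψ) (hl : 0 ≤ lam)
    (hlap : ∀ x, lap n ψ x = -lam * ψ x) (z : EuclideanSpace ℝ (Fin n)) {d A : ℝ} (hd : 0 < d)
    (hld : lam * d ^ 2 ≤ 1 / 100) (hz : ψ z = 0) (hA : ∀ y, ‖y - z‖ ≤ d / 2 → -ψ y ≤ A)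
    (x : EuclideanSpace ℝ (Fin n)) (hx : ‖x - z‖ ≤ d / 4) : |ψ x| ≤ 2 ^ (n + 2) * A := by
  have hA0 : 0 ≤ A := by have := hA z (by simp; positivity); linarith
  have hv : ContDiff ℝ (⊤ : ℕ∞) (fun x => ψ x + A) := hψ.add contDiff_const
  have e : (1 + 1) * (d / 4) = d / 2 := by ring
  have := harnack hv (x := x) (p := z) (δ := 1) (w := d / 4) (lam := lam) (A := A) one_pos
    (by positivity) hl hA0 (by simpa using hx) (fun y hy => ?_) (fun y hy => ?_) (fun y hy => ?_)
  · have h1 : (ψ z + A + lam * A * ((1 + 1) * (d / 4)) ^ 2 / 8) ≤ (1 + 1 / 3200) * A := by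
      rw [hz]; nlinarith
    have h2 : Real.exp (lam * (d / 4) ^ 2 / 8) ≤ 1 / (1 - 1 / 12800) :=
      exp_le_aux (by nlinarith) (by norm_num)
    have h3 : Real.exp (lam * (d / 4) ^ 2 / 8) * (ψ z + A + lam * A * ((1 + 1) * (d / 4)) ^ 2 / 8)
        ≤ 2 * A := by
      calc _ ≤ 1 / (1 - 1 / 12800) * ((1 + 1 / 3200) * A) := by
            apply mul_le_mul h2 h1 _ (by norm_num)
            rw [hz]; positivity
        _ ≤ _ := by nlinarith
    have h4 : ψ x + A ≤ 2 ^ (n + 2) * A := by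
      calc _ ≤ _ := this
        _ ≤ (1 + 1) ^ (n + 1) * (2 * A) := by gcongr
        _ = _ := by norm_num; ring
    have h5 : (1:ℝ) ≤ 2 ^ (n + 2) := one_le_pow₀ (by norm_num)
    have h6 := hA x (by linarith)
    rw [abs_le]; constructor <;> nlinarith
  · have := hA y (by rw [← e]; exact hy); linarith
  · rw [lap_add_const, hlap]; nlinarith
  · have := hA y (by rw [← e]; exact hy)
    rw [lap_add_const, hlap]; nlinarith

lemma neg_near {n : ℕ} (hn : 0 < n) {ψ : EuclideanSpace ℝ (Fin n) → ℝ} {lam : ℝ}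
    (hψ : ContDiff ℝ (⊤ : ℕ∞) ψ) (hl : 0 < lam)
    (hlap : ∀ x, lap n ψ x = -lam * ψ x) (z p : EuclideanSpace ℝ (Fin n)) {d s w μ : ℝ}
    (hw : 0 < w) (hs : 0 ≤ s) (hsw : s + w ≤ d)
    (hld : lam * d ^ 2 ≤ 1 / 100) (hμ : 0 < μ) (hp : ‖p - z‖ ≤ s)
    (hpe : -ψ p = μ * (1 - lam / n * ‖p - z‖ ^ 2))
    (h1 : ∀ y, ‖y - z‖ ≤ s → -ψ y ≤ μ * (1 - lam / n * ‖y - z‖ ^ 2))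
    (h2 : ∀ y, ‖y - z‖ ≤ s + w → -ψ y ≤ 2 * μ * (1 - lam / n * ‖y - z‖ ^ 2)) :
    ‖p - z‖ = s ∧ ∀ x, ‖x - p‖ ≤ w / (20 * (n + 1)) → ψ x < 0 := by
  have hn' : (0:ℝ) < n := by exact_mod_cast hn
  have hn1 : (1:ℝ) ≤ n := by exact_mod_cast hn
  have hg : ∀ y : EuclideanSpace ℝ (Fin n), 0 ≤ lam / n * ‖y - z‖ ^ 2 := fun y => by positivity
  constructor
  · by_contra hne
    have hlt : ‖p - z‖ < s := lt_of_le_of_ne hp hne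
    have hmax : IsLocalMax (fun y => (-1) * ψ y + ((μ * lam / n) * ‖y - z‖ ^ 2 + (-μ))) p := by
      have : ∀ᶠ y in nhds p, ‖y - z‖ < s :=
        (by fun_prop : Continuous fun y : EuclideanSpace ℝ (Fin n) => ‖y - z‖).continuousAt.eventually
          (Iio_mem_nhds hlt)
      filter_upwards [this] with y hy
      have e1 := h1 y hy.le
      have e2 : (-1) * ψ p + ((μ * lam / n) * ‖p - z‖ ^ 2 + (-μ)) = 0 := by
        have : (-1) * ψ p = -ψ p := by ring
        rw [this, hpe]; ring
      rw [e2]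
      have e3 : μ * (1 - lam / n * ‖y - z‖ ^ 2) = μ - μ * lam / n * ‖y - z‖ ^ 2 := by ring
      linarith
    have hL := ((hasLap_smooth hψ p).const_mul (-1)).add
      (((hasLap_normsq p z).const_mul (μ * lam / n)).add (hasLap_const (-μ) p))
    have := Finset.sum_nonpos fun i (_ : i ∈ Finset.univ) => hL.nonpos hmax i
    rw [Finset.sum_add_distrib, ← Finset.mul_sum] at this
    have e4 := hlap p
    simp only [lap] at e4
    rw [e4] at this
    simp only [add_zero, Finset.sum_const, Finset.card_univ, Fintype.card_fin, nsmul_eq_mul] at this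
    have e5 : (n:ℝ) * (μ * lam / n * 2) = 2 * μ * lam := by field_simp
    rw [e5] at this
    have e6 : μ * (1 - lam / n * ‖p - z‖ ^ 2) ≤ μ := by
      have := mul_nonneg hμ.le (hg p)
      linarith
    have e7 : -ψ p ≤ μ := hpe ▸ e6
    have := mul_le_mul_of_nonneg_left e7 hl.le
    linarith [mul_pos hl hμ]
  · intro x hx
    set δ : ℝ := 1 / (10 * (n + 1)) with hδ
    have hδ0 : 0 < δ := by positivity
    have hδ1 : δ ≤ 1 := by rw [hδ, div_le_one (by positivity)]; linarith
    have hw' : 0 < w / (1 + δ) := by positivity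
    have e : (1 + δ) * (w / (1 + δ)) = w := by field_simp
    have hww : w / (1 + δ) ≤ w := div_le_self hw.le (by linarith)
    have hx' : ‖x - p‖ ≤ δ * (w / (1 + δ)) := by
      refine hx.trans ?_
      have : w / (20 * (n + 1)) = δ * (w / 2) := by rw [hδ]; field_simp; norm_num
      rw [this]
      gcongr; linarith
    have htri : ∀ y, ‖y - p‖ ≤ w → ‖y - z‖ ≤ s + w := fun y hy => by
      have : y - z = (y - p) + (p - z) := by abel
      rw [this]; linarith [norm_add_le (y - p) (p - z)]
    have hb : ∀ y, ‖y - p‖ ≤ w → 0 ≤ ψ y + 2 * μ := fun y hy => by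
      have := h2 y (htri y hy)
      have := mul_nonneg hμ.le (hg y)
      linarith
    have hv : ContDiff ℝ (⊤ : ℕ∞) (fun x => ψ x + 2 * μ) := hψ.add contDiff_const
    have hwd : lam * w ^ 2 ≤ 1 / 100 := by
      have : w ^ 2 ≤ d ^ 2 := pow_le_pow_left₀ hw.le (by linarith) 2
      exact (mul_le_mul_of_nonneg_left this hl.le).trans hld
    have hsd : lam * ‖p - z‖ ^ 2 ≤ 1 / 100 := by
      have : ‖p - z‖ ^ 2 ≤ d ^ 2 := pow_le_pow_left₀ (norm_nonneg _) (by linarith) 2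
      exact (mul_le_mul_of_nonneg_left this hl.le).trans hld
    have hgp : lam / n * ‖p - z‖ ^ 2 ≤ 1 / 100 := by
      have : lam / n ≤ lam := div_le_self hl.le hn1
      exact (mul_le_mul_of_nonneg_right this (sq_nonneg _)).trans hsd
    have := harnack hv (x := x) (p := p) (δ := δ) (w := w / (1 + δ)) (lam := lam) (A := 2 * μ) hδ0
      hw' hl.le (by positivity) hx' (fun y hy => ?_) (fun y hy => ?_) (fun y hy => ?_)
    · rw [e] at this
      have hvp : ψ p + 2 * μ ≤ (1 + 1 / 100) * μ := by
        have := mul_le_mul_of_nonneg_left hgp hμ.le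
        linarith
      have hvp0 := hb p (by simpa using hw.le)
      have k1 : ψ p + 2 * μ + lam * (2 * μ) * w ^ 2 / 8 ≤ (1 + 2 / 100) * μ := by
        have := mul_le_mul_of_nonneg_left hwd hμ.le
        linarith
      have k2 : Real.exp (lam * (w / (1 + δ)) ^ 2 / 8) ≤ 1 / (1 - 1 / 800) := by
        refine exp_le_aux ?_ (by norm_num)
        have : (w / (1 + δ)) ^ 2 ≤ w ^ 2 := pow_le_pow_left₀ hw'.le hww 2
        have := mul_le_mul_of_nonneg_left this hl.le
        linarith
      have k3 : (1 + δ) ^ (n + 1) ≤ 1 / (1 - 1 / 10) := by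
        calc (1 + δ) ^ (n + 1) ≤ (Real.exp δ) ^ (n + 1) := by
              gcongr; linarith [Real.add_one_le_exp δ]
          _ = Real.exp (1 / 10) := by
              rw [← Real.exp_nat_mul]; congr 1; rw [hδ]; push_cast; field_simp
          _ ≤ _ := exp_le_aux le_rfl (by norm_num)
      have k4 : ψ x + 2 * μ ≤ 1 / (1 - 1 / 10) * (1 / (1 - 1 / 800) * ((1 + 2 / 100) * μ)) := by
        refine this.trans ?_
        gcongr
      norm_num at k4
      linarith
    · rw [e] at hy; exact hb y hy
    · rw [lap_add_const, hlap]
      have := mul_pos hl hμ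
      linarith
    · rw [e] at hy
      have := mul_nonneg hl.le (hb y hy)
      rw [lap_add_const, hlap]; linarith

lemma points {n : ℕ} (hn : 0 < n) {ψ : EuclideanSpace ℝ (Fin n) → ℝ} {lam : ℝ}
    (hψ : ContDiff ℝ (⊤ : ℕ∞) ψ) (hper : ZnPeriodic n ψ) (hl : 0 < lam)
    (hlap : ∀ x, lap n ψ x = -lam * ψ x) (D : ℕ) (hD0 : 0 < D)
    (hD : lam ≤ (D:ℝ) ^ 2) (z : EuclideanSpace ℝ (Fin n)) {d : ℝ} (hd : 0 < d)
    (hd4 : d ≤ 1 / 4) (hld : lam * d ^ 2 ≤ 1 / 100) (hz : ψ z = 0)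
    (x0 : EuclideanSpace ℝ (Fin n)) (hx0 : ‖x0 - z‖ ≤ d) (hx0p : 0 < ψ x0) (K L : ℕ) (hK : 0 < K)
    (hL : 0 < L) (hKL : 2 * ((n + 5) * (2 * D) * n + n + 3) ≤ K * L) :
    ∃ (G : Finset ℕ) (p : ℕ → EuclideanSpace ℝ (Fin n)), G.card ≤ K ∧ K ≤ 2 * G.card ∧
      (∀ b ∈ G, ‖p b - z‖ ≤ d ∧ ∀ x, ‖x - p b‖ ≤ d / (4 * K * L) / (20 * (n + 1)) → ψ x < 0) ∧
      ∀ b ∈ G, ∀ c ∈ G, b ≠ c → d / (4 * K) ≤ ‖p b - p c‖ := by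
  have hn' : (0:ℝ) < n := by exact_mod_cast hn
  have hn1 : (1:ℝ) ≤ n := by exact_mod_cast hn
  have hK' : (0:ℝ) < K := by exact_mod_cast hK
  have hL' : (0:ℝ) < L := by exact_mod_cast hL
  have hψc := hψ.continuous
  set w : ℝ := d / (4 * K * L) with hw
  have hw0 : 0 < w := by positivity
  set g : EuclideanSpace ℝ (Fin n) → ℝ := fun y => 1 - lam / n * ‖y - z‖ ^ 2 with hg
  have hg1 : ∀ y, g y ≤ 1 := fun y => by
    have : 0 ≤ lam / n * ‖y - z‖ ^ 2 := by positivity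
    simp only [hg]; linarith
  have hg2 : ∀ y, ‖y - z‖ ≤ d → 1 / 2 ≤ g y := fun y hy => by
    have h1 : ‖y - z‖ ^ 2 ≤ d ^ 2 := pow_le_pow_left₀ (norm_nonneg _) hy 2
    have h2 : lam / n ≤ lam := div_le_self hl.le hn1
    have h3 : lam / n * ‖y - z‖ ^ 2 ≤ lam * d ^ 2 := by gcongr
    simp only [hg]; linarith
  set q : EuclideanSpace ℝ (Fin n) → ℝ := fun y => max (g y) (1 / 2) with hq
  have hq0 : ∀ y, 0 < q y := fun y => lt_of_lt_of_le (by norm_num) (le_max_right _ _)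
  have hq2 : ∀ y, 1 / 2 ≤ q y := fun y => (le_max_right _ _)
  have hq1 : ∀ y, q y ≤ 1 := fun y => max_le (hg1 y) (by norm_num)
  have hqc : Continuous q := by simp only [hq, hg]; fun_prop
  have hqg : ∀ y, ‖y - z‖ ≤ d → q y = g y := fun y hy => max_eq_left (hg2 y hy)
  set φ : EuclideanSpace ℝ (Fin n) → ℝ := fun y => -ψ y / q y with hφ
  have hφc : Continuous φ := hψc.neg.div hqc fun y => (hq0 y).ne'
  have hφq : ∀ y, -ψ y = φ y * q y := fun y => by
    simp only [hφ]; rw [div_mul_cancel₀ _ (hq0 y).ne']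
  set s : ℕ → ℝ := fun i => d / 2 + i * w with hs
  have hs0 : ∀ i, 0 ≤ s i := fun i => by simp only [hs]; positivity
  have hss : ∀ i, s (i + 1) = s i + w := fun i => by simp only [hs]; push_cast; ring
  have hsN : s (2 * K * L) = d := by simp only [hs, hw]; push_cast; field_simp; ring
  have hsle : ∀ i, i ≤ 2 * K * L → s i ≤ d := fun i hi => by
    rw [← hsN]; simp only [hs]
    have : (i:ℝ) ≤ ((2 * K * L : ℕ) : ℝ) := by exact_mod_cast hi
    gcongr
  have hex : ∀ i, ∃ p, ‖p - z‖ ≤ s i ∧ ∀ y, ‖y - z‖ ≤ s i → φ y ≤ φ p := fun i => by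
    obtain ⟨p, hp, hpm⟩ := (isCompact_closedBall z (s i)).exists_isMaxOn
      ⟨z, by simpa using hs0 i⟩ hφc.continuousOn
    refine ⟨p, by simpa [dist_eq_norm] using hp, fun y hy => hpm (by simpa [dist_eq_norm] using hy)⟩
  choose P hP hPm using hex
  set M : ℕ → ℝ := fun i => φ (P i) with hM
  have hmono : ∀ i, M i ≤ M (i + 1) := fun i =>
    hPm (i + 1) _ ((hP i).trans (by rw [hss]; linarith))
  -- A
  obtain ⟨yA, hyA, hyAm⟩ := (isCompact_closedBall z (d / 2)).exists_isMaxOn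
      ⟨z, by simp; positivity⟩ hψc.neg.continuousOn
  have hyA' : ‖yA - z‖ ≤ d / 2 := by simpa [dist_eq_norm] using hyA
  set A := -ψ yA with hA
  have hAb : ∀ y, ‖y - z‖ ≤ d / 2 → -ψ y ≤ A := fun y hy =>
    hyAm (by simpa [dist_eq_norm] using hy)
  have hdoub := doubling hn hψ hper hlap D hD0 hD z hd hd4
    (local_bound hψ hl.le hlap z hd hld hz hAb)
  set E : ℝ := ((5 * (4 * n + 1)) ^ (2 * D)) ^ n with hE
  have hE0 : 0 < E := by positivity
  have hA0 : 0 < A := by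
    have h1 := hdoub x0 hx0
    rw [abs_of_pos hx0p] at h1
    by_contra hneg
    push Not at hneg
    have : E * (2 ^ (n + 2) * A) ≤ 0 := by
      have : (2:ℝ) ^ (n + 2) * A ≤ 0 := mul_nonpos_of_nonneg_of_nonpos (by positivity) hneg
      exact mul_nonpos_of_nonneg_of_nonpos hE0.le this
    linarith
  have hM0 : A ≤ M 0 := by
    refine le_trans ?_ (hPm 0 yA (by simpa [hs] using hyA'))
    simp only [hφ]
    rw [le_div_iff₀ (hq0 _)]
    nlinarith [hq1 yA]
  have hM0p : 0 < M 0 := hA0.trans_le hM0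
  have hMpos : ∀ i, 0 < M i := fun i => hM0p.trans_le (monotone_nat_of_le_succ hmono (Nat.zero_le i))
  have hE2 : E ≤ 2 ^ ((n + 5) * (2 * D) * n) := by
    rw [hE, pow_mul (2:ℝ) _ n, pow_mul (2:ℝ) (n + 5)]
    gcongr
    have h1 : (n:ℝ) ≤ 2 ^ n := by exact_mod_cast Nat.lt_two_pow_self.le
    have h2 : (2:ℝ) ^ (n + 5) = 2 ^ n * 32 := by rw [pow_add]; norm_num
    rw [h2]; linarith
  have hMN : M (2 * K * L) ≤ 2 ^ ((n + 5) * (2 * D) * n + n + 3) * M 0 := by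
    have h1 := hdoub (P (2 * K * L)) ((hP _).trans (hsN.le))
    have h2 : M (2 * K * L) ≤ 2 * |ψ (P (2 * K * L))| := by
      simp only [hM, hφ]
      rw [div_le_iff₀ (hq0 _)]
      have := neg_le_abs (ψ (P (2 * K * L)))
      nlinarith [abs_nonneg (ψ (P (2 * K * L))), hq2 (P (2 * K * L))]
    calc M (2 * K * L) ≤ 2 * (E * (2 ^ (n + 2) * A)) := h2.trans (by gcongr)
      _ ≤ 2 * (2 ^ ((n + 5) * (2 * D) * n) * (2 ^ (n + 2) * M 0)) := by gcongr
      _ = _ := by ring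
  obtain ⟨G, hGK, hGc, j, hj⟩ := blocks M hmono hM0p K L _ hL hMN hKL
  set idx : ℕ → ℕ := fun b => 2 * L * b + j b with hidx
  have hidxN : ∀ b ∈ G, idx b + 1 ≤ 2 * K * L := fun b hb => by
    have h0 := (hj b hb).1
    have h1 : b + 1 ≤ K := Finset.mem_range.1 (hGK hb)
    have h5 : 2 * L * (b + 1) ≤ 2 * L * K := Nat.mul_le_mul_left _ h1
    have h6 : 2 * L * (b + 1) = 2 * L * b + 2 * L := by ring
    have h7 : 2 * K * L = 2 * L * K := by ring
    simp only [hidx]; omega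
  have hmain : ∀ b ∈ G, ‖P (idx b) - z‖ = s (idx b) ∧
      ∀ x, ‖x - P (idx b)‖ ≤ w / (20 * (n + 1)) → ψ x < 0 := fun b hb => by
    have hle := hsle _ (hidxN b hb)
    rw [hss] at hle
    refine neg_near hn hψ hl hlap z (P (idx b)) (d := d) (s := s (idx b)) (w := w) (μ := M (idx b))
      hw0 (hs0 _) hle hld (hMpos _) (hP _) ?_ ?_ ?_
    · rw [hφq, hqg _ ((hP _).trans (by linarith))]
    · intro y hy
      have h1 := hPm _ y hy
      have hyd : ‖y - z‖ ≤ d := by linarith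
      rw [hφq, hqg _ hyd]
      have := hg2 y hyd
      change φ y * g y ≤ φ (P (idx b)) * g y
      gcongr
    · intro y hy
      have h1 := hPm _ y ((hss (idx b)).symm ▸ hy)
      have hyd : ‖y - z‖ ≤ d := by linarith
      rw [hφq, hqg _ hyd]
      have := hg2 y hyd
      change φ y * g y ≤ 2 * M (idx b) * g y
      have h2 := (hj b hb).2
      have h3 : φ y ≤ 2 * M (idx b) := h1.trans h2
      gcongr
  refine ⟨G, fun b => P (idx b), ?_, hGc, fun b hb => ⟨?_, (hmain b hb).2⟩, ?_⟩
  · simpa using Finset.card_le_card hGK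
  · exact (hP _).trans (hsle _ (by have := hidxN b hb; omega))
  · intro b hb c hc hbc
    have e1 : d / (4 * K) = w * L := by rw [hw]; field_simp
    have h1 : ∀ b ∈ G, ∀ c ∈ G, b < c → w * L ≤ ‖P (idx b) - P (idx c)‖ := by
      intro b hb c hc hbc
      have h2 : idx b + L ≤ idx c := by
        have h5 : 2 * L * (b + 1) ≤ 2 * L * c := Nat.mul_le_mul_left _ hbc
        have h6 : 2 * L * (b + 1) = 2 * L * b + 2 * L := by ring
        have := (hj b hb).1
        simp only [hidx]; omega
      have h3 : (idx b : ℝ) + L ≤ idx c := by exact_mod_cast h2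
      have h4 : s (idx b) + w * L ≤ s (idx c) := by simp only [hs]; nlinarith
      rw [← (hmain b hb).1, ← (hmain c hc).1] at h4
      have h7 : P (idx c) - z = (P (idx b) - z) - (P (idx b) - P (idx c)) := by abel
      have h8 := norm_sub_le (P (idx b) - z) (P (idx b) - P (idx c))
      rw [← h7] at h8
      linarith
    rw [e1]
    rcases lt_or_gt_of_ne hbc with h | h
    · exact h1 b hb c hc h
    · have := h1 c hc b hb h
      rwa [norm_sub_rev] at this

lemma nodal_facts {n : ℕ} {ψ : EuclideanSpace ℝ (Fin n) → ℝ} (hψ : Continuous ψ)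
    {x : EuclideanSpace ℝ (Fin n)} (hx : 0 < ψ x) {Ω : Set (EuclideanSpace ℝ (Fin n))}
    (hΩ : Ω = connectedComponentIn {y | ψ y ≠ 0} x) :
    x ∈ Ω ∧ IsOpen Ω ∧ (∀ y ∈ Ω, 0 < ψ y) ∧ (∀ y ∈ closure Ω, y ∉ Ω → ψ y = 0) ∧
    ∀ x0 ∈ Ω, ∀ d, 0 < d → (∀ y ∈ ball x0 d, ψ y ≠ 0) → ball x0 d ⊆ Ω := by
  have hU : IsOpen {y | ψ y ≠ 0} := isOpen_ne.preimage hψ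
  have hxU : x ∈ {y | ψ y ≠ 0} := hx.ne'
  have hxΩ : x ∈ Ω := hΩ ▸ mem_connectedComponentIn hxU
  have hpre : IsPreconnected Ω := hΩ ▸ isPreconnected_connectedComponentIn
  have hsub : Ω ⊆ {y | ψ y ≠ 0} := hΩ ▸ connectedComponentIn_subset _ _
  have hmax : ∀ V : Set (EuclideanSpace ℝ (Fin n)), IsPreconnected V → x ∈ V →
      V ⊆ {y | ψ y ≠ 0} → V ⊆ Ω := fun V hV hxV hVU =>
    hΩ ▸ hV.subset_connectedComponentIn hxV hVU
  refine ⟨hxΩ, hΩ ▸ hU.connectedComponentIn, ?_, ?_, ?_⟩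
  · intro y hy
    by_contra hneg
    push Not at hneg
    obtain ⟨c, hc, hc0⟩ := hpre.intermediate_value hy hxΩ hψ.continuousOn ⟨hneg, hx.le⟩
    exact hsub hc hc0
  · intro y hy hyn
    by_contra hne
    have h1 : IsPreconnected (insert y Ω) :=
      hpre.subset_closure (Set.subset_insert _ _) (Set.insert_subset hy subset_closure)
    exact hyn (hmax _ h1 (Set.mem_insert_of_mem _ hxΩ) (Set.insert_subset hne hsub)
      (Set.mem_insert _ _))
  · intro x0 hx0 d hd hball
    have h1 : IsPreconnected (Ω ∪ ball x0 d) :=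
      hpre.union x0 hx0 (mem_ball_self hd) (convex_ball x0 d).isPreconnected
    exact Set.subset_union_right.trans (hmax _ h1 (Or.inl hxΩ) (Set.union_subset hsub hball))

lemma rp_eq {k : ℕ} {r α : ℝ} (hr : 0 < r) (hα : 2 * α = k) : (r ^ 2) ^ (-α) = (r ^ k)⁻¹ := by
  rw [Real.rpow_neg (by positivity), ← Real.rpow_natCast r 2, ← Real.rpow_mul hr.le]
  congr 1
  rw [← Real.rpow_natCast]; congr 1

lemma sum_sep {n : ℕ} (k : ℕ) (G : Finset ℕ) (p : ℕ → EuclideanSpace ℝ (Fin n)) {τ σ : ℝ}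
    (hτ : 0 < τ) (hσ : 0 < σ) (hsep : ∀ b ∈ G, ∀ c ∈ G, b ≠ c → σ ≤ ‖p b - p c‖)
    (y : EuclideanSpace ℝ (Fin n)) (hy : ∀ b ∈ G, τ ≤ ‖y - p b‖) :
    ∑ b ∈ G, (‖y - p b‖ ^ k)⁻¹ ≤ (τ ^ k)⁻¹ + G.card * ((σ / 2) ^ k)⁻¹ := by
  have hfar : ∀ T : Finset ℕ, T ⊆ G → (∀ b ∈ T, σ / 2 ≤ ‖y - p b‖) →
      ∑ b ∈ T, (‖y - p b‖ ^ k)⁻¹ ≤ G.card * ((σ / 2) ^ k)⁻¹ := by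
    intro T hT h
    calc _ ≤ ∑ b ∈ T, ((σ / 2) ^ k)⁻¹ := Finset.sum_le_sum fun b hb => by
          have := h b hb
          gcongr
      _ = T.card * ((σ / 2) ^ k)⁻¹ := by simp
      _ ≤ _ := by
        have : (T.card : ℝ) ≤ G.card := by exact_mod_cast Finset.card_le_card hT
        gcongr
  by_cases hex : ∃ b ∈ G, ‖y - p b‖ < σ / 2
  · obtain ⟨b, hb, hlt⟩ := hex
    rw [← Finset.add_sum_erase _ _ hb]
    refine add_le_add ?_ (hfar _ (Finset.erase_subset _ _) ?_)
    · have := hy b hb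
      gcongr
    · intro c hc
      have hc' := Finset.mem_erase.1 hc
      have h1 := hsep b hb c hc'.2 (Ne.symm hc'.1)
      have h2 : p b - p c = (y - p c) - (y - p b) := by abel
      have h3 := norm_sub_le (y - p c) (y - p b)
      rw [← h2] at h3
      linarith
  · push Not at hex
    have := hfar G (Finset.Subset.refl _) hex
    have h0 : 0 ≤ (τ ^ k)⁻¹ := by positivity
    linarith

lemma barrier {n k : ℕ} (hk : n = k + 2) {ψ : EuclideanSpace ℝ (Fin n) → ℝ} {lam : ℝ}
    (hψ : ContDiff ℝ (⊤ : ℕ∞) ψ) (hl : 0 < lam)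
    (hlap : ∀ x, lap n ψ x = -lam * ψ x) {Ω : Set (EuclideanSpace ℝ (Fin n))} (hΩo : IsOpen Ω)
    (hpos : ∀ y ∈ Ω, 0 < ψ y) (hbd : ∀ y ∈ closure Ω, y ∉ Ω → ψ y = 0) {S θ d τ σ κ : ℝ}
    (hS : 0 < S) (hSle : ∀ y ∈ Ω, ψ y ≤ S) (hd : 0 < d) (hτ : 0 < τ) (hσ : 0 < σ) (hκ : 0 < κ)
    {x0 : EuclideanSpace ℝ (Fin n)} (hx0 : x0 ∈ Ω) (hx0S : (1 - θ) * S ≤ ψ x0) (G : Finset ℕ)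
    (p : ℕ → EuclideanSpace ℝ (Fin n)) (hp : ∀ b ∈ G, ‖x0 - p b‖ ≤ 2 * d)
    (hneg : ∀ b ∈ G, ∀ x, ‖x - p b‖ ≤ τ → ψ x < 0)
    (hsep : ∀ b ∈ G, ∀ c ∈ G, b ≠ c → σ ≤ ‖p b - p c‖)
    (hκ1 : κ * ((τ ^ k)⁻¹ + G.card * ((σ / 2) ^ k)⁻¹) ≤ 1) :
    κ * (G.card * (((2 * d) ^ k)⁻¹ - ((4 * d) ^ k)⁻¹)) ≤ θ + 36 * (lam / n) * d ^ 2 := by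
  have hn' : (0:ℝ) < n := by rw [hk]; positivity
  set α : ℝ := (k:ℝ) / 2 with hα
  have hα2 : 2 * α = k := by rw [hα]; ring
  have hα3 : 2 * α + 2 = n := by rw [hα2, hk]; push_cast; ring
  have hψc := hψ.continuous
  set c : ℝ := -1 - κ * (G.card * ((4 * d) ^ k)⁻¹) - 36 * (lam / n) * d ^ 2 with hc
  set F : EuclideanSpace ℝ (Fin n) → ℝ := fun x => (1 / S) * ψ x +
    (κ * (∑ b ∈ G, (‖x - p b‖ ^ 2) ^ (-α)) + ((lam / n) * ‖x - x0‖ ^ 2 + c)) with hF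
  have hcl0 : ∀ y ∈ closure Ω, 0 ≤ ψ y := fun y hy => by
    by_cases h : y ∈ Ω
    · exact (hpos y h).le
    · exact (hbd y hy h).ge
  have hclS : ∀ y ∈ closure Ω, ψ y ≤ S := fun y hy => by
    by_cases h : y ∈ Ω
    · exact hSle y h
    · rw [hbd y hy h]; exact hS.le
  have hfar : ∀ y ∈ closure Ω, ∀ b ∈ G, τ < ‖y - p b‖ := fun y hy b hb => by
    by_contra h
    push Not at h
    have := hneg b hb y h
    have := hcl0 y hy
    linarith
  have hnep : ∀ y ∈ closure Ω, ∀ b ∈ G, y ≠ p b := fun y hy b hb h => by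
    have := hfar y hy b hb
    rw [h] at this
    simp at this; linarith
  have hsum : ∀ y ∈ closure Ω, ∑ b ∈ G, (‖y - p b‖ ^ 2) ^ (-α) = ∑ b ∈ G, (‖y - p b‖ ^ k)⁻¹ :=
    fun y hy => Finset.sum_congr rfl fun b hb => rp_eq (hτ.trans (hfar y hy b hb)) hα2
  have hFc : ContinuousOn F (closure Ω ∩ closedBall x0 (6 * d)) := by
    have h1 : ContinuousOn (fun x => ∑ b ∈ G, (‖x - p b‖ ^ 2) ^ (-α))
        (closure Ω ∩ closedBall x0 (6 * d)) := by
      refine continuousOn_finsetSum _ fun b hb => ?_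
      refine ContinuousOn.rpow_const (by fun_prop) fun y hy => Or.inl ?_
      have := hτ.trans (hfar y hy.1 b hb)
      positivity
    have h2 : ContinuousOn (fun x => (1 / S) * ψ x) (closure Ω ∩ closedBall x0 (6 * d)) := by
      fun_prop
    have h3 : ContinuousOn (fun x => ((lam / n) * ‖x - x0‖ ^ 2 + c))
      (closure Ω ∩ closedBall x0 (6 * d)) := by fun_prop
    exact h2.add ((continuousOn_const.mul h1).add h3)
  have hcomp : IsCompact (closure Ω ∩ closedBall x0 (6 * d)) :=
    (isCompact_closedBall x0 (6 * d)).inter_left isClosed_closure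
  have hx0Q : x0 ∈ closure Ω ∩ closedBall x0 (6 * d) :=
    ⟨subset_closure hx0, by simp; positivity⟩
  obtain ⟨y, hyQ, hymax⟩ := hcomp.exists_isMaxOn ⟨x0, hx0Q⟩ hFc
  have hy6 : ‖y - x0‖ ≤ 6 * d := by simpa [dist_eq_norm] using hyQ.2
  have hy62 : ‖y - x0‖ ^ 2 ≤ 36 * d ^ 2 := by
    have := pow_le_pow_left₀ (norm_nonneg _) hy6 2
    nlinarith
  have hy63 : lam / n * ‖y - x0‖ ^ 2 ≤ 36 * (lam / n) * d ^ 2 := by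
    have : 0 < lam / n := by positivity
    nlinarith
  have hFy : F y ≤ 0 := by
    by_cases hyΩ : y ∈ Ω
    · rcases lt_or_eq_of_le hy6 with hlt | heq
      · exfalso
        have hloc : IsLocalMax F y := by
          have h1 : ball x0 (6 * d) ∈ nhds y := isOpen_ball.mem_nhds (by
            simpa [dist_eq_norm] using hlt)
          filter_upwards [h1, hΩo.mem_nhds hyΩ] with x hx1 hx2
          exact hymax ⟨subset_closure hx2, ball_subset_closedBall hx1⟩
        have hL := ((hasLap_smooth hψ y).const_mul (1 / S)).add
          (((HasLap.sum G fun b hb => hasLap_rpow y (p b) (hnep y hyQ.1 b hb) α).const_mul κ).add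
          (((hasLap_normsq y x0).const_mul (lam / n)).add (hasLap_const c y)))
        have h2 := Finset.sum_nonpos fun i (_ : i ∈ Finset.univ) => hL.nonpos hloc i
        rw [Finset.sum_add_distrib, Finset.sum_add_distrib, ← Finset.mul_sum, ← Finset.mul_sum,
          Finset.sum_comm, Finset.sum_eq_zero
            (fun b hb => lap_rpow_eq y (p b) (hnep y hyQ.1 b hb) α hα3)] at h2
        have e4 := hlap y
        simp only [lap] at e4
        rw [e4] at h2
        simp only [add_zero, Finset.sum_const, Finset.card_univ, Fintype.card_fin,
          nsmul_eq_mul, mul_zero, zero_add] at h2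
        have e5 : (n:ℝ) * (lam / n * 2) = 2 * lam := by field_simp
        rw [e5] at h2
        have e6 : 1 / S * (-lam * ψ y) = -(lam * (ψ y / S)) := by field_simp
        have e7 : ψ y / S ≤ 1 := (div_le_one hS).2 (hSle y hyΩ)
        rw [e6] at h2
        nlinarith
      · have h4 : ∀ b ∈ G, 4 * d ≤ ‖y - p b‖ := fun b hb => by
          have h5 := hp b hb
          have h6 : y - x0 = (y - p b) - (x0 - p b) := by abel
          have h7 := norm_sub_le (y - p b) (x0 - p b)
          rw [← h6] at h7
          linarith
        have h8 : ∑ b ∈ G, (‖y - p b‖ ^ k)⁻¹ ≤ G.card * ((4 * d) ^ k)⁻¹ := by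
          calc _ ≤ ∑ b ∈ G, ((4 * d) ^ k)⁻¹ := Finset.sum_le_sum fun b hb => by
                have := h4 b hb
                gcongr
            _ = _ := by simp
        have h9 : κ * ∑ b ∈ G, (‖y - p b‖ ^ k)⁻¹ ≤ κ * (G.card * ((4 * d) ^ k)⁻¹) := by gcongr
        have h10 : 1 / S * ψ y ≤ 1 := by
          rw [one_div, inv_mul_le_iff₀ hS]; linarith [hSle y hyΩ]
        simp only [hF]
        rw [hsum y hyQ.1]
        linarith
    · simp only [hF]
      rw [hsum y hyQ.1, hbd y hyQ.1 hyΩ]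
      have h8 := sum_sep k G p hτ hσ hsep y (fun b hb => (hfar y hyQ.1 b hb).le)
      have h9 : κ * ∑ b ∈ G, (‖y - p b‖ ^ k)⁻¹ ≤ 1 := le_trans (by gcongr) hκ1
      have h10 : 0 ≤ κ * (G.card * ((4 * d) ^ k)⁻¹) := by positivity
      linarith
  have hFx0 : F x0 ≤ 0 := (hymax hx0Q).trans hFy
  simp only [hF] at hFx0
  rw [hsum x0 hx0Q.1] at hFx0
  have h1 : G.card * ((2 * d) ^ k)⁻¹ ≤ ∑ b ∈ G, (‖x0 - p b‖ ^ k)⁻¹ := by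
    calc _ = ∑ b ∈ G, ((2 * d) ^ k)⁻¹ := by simp
      _ ≤ _ := Finset.sum_le_sum fun b hb => by
          have h2 := hp b hb
          have h3 := hτ.trans (hfar x0 hx0Q.1 b hb)
          gcongr
  have h2 : κ * (G.card * ((2 * d) ^ k)⁻¹) ≤ κ * ∑ b ∈ G, (‖x0 - p b‖ ^ k)⁻¹ := by gcongr
  have h3 : 1 - θ ≤ 1 / S * ψ x0 := by
    rw [one_div, le_inv_mul_iff₀ hS]; linarith
  simp only [sub_self, norm_zero] at hFx0
  have h4 : κ * (G.card * (((2 * d) ^ k)⁻¹ - ((4 * d) ^ k)⁻¹)) =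
    κ * (G.card * ((2 * d) ^ k)⁻¹) - κ * (G.card * ((4 * d) ^ k)⁻¹) := by ring
  rw [h4]
  have h5 : lam / n * (0:ℝ) ^ 2 = 0 := by ring
  linarith

lemma final_arith {k ℓ g : ℕ} (hk : 1 ≤ k) (hℓ : 1 ≤ ℓ) {R d : ℝ} (hR : 8 ≤ R) (hd : 0 < d)
    (hg : g ≤ ℓ ^ k) (hg2 : ℓ ^ k ≤ 2 * g) {κ : ℝ}
    (hκ : κ = d ^ k / (2 * R ^ k * ((ℓ:ℝ) ^ (k + 2)) ^ k)) :
    κ * (((d / (R * (ℓ:ℝ) ^ (k + 2))) ^ k)⁻¹ + g * ((d / (4 * (ℓ:ℝ) ^ k) / 2) ^ k)⁻¹) ≤ 1 ∧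
    1 / (4 * (4 * R) ^ k * (ℓ:ℝ) ^ ((k + 1) * k)) ≤
      κ * (g * (((2 * d) ^ k)⁻¹ - ((4 * d) ^ k)⁻¹)) := by
  have hℓ' : (1:ℝ) ≤ ℓ := by exact_mod_cast hℓ
  have hℓ0 : (0:ℝ) < ℓ := by linarith
  have hR0 : 0 < R := by linarith
  have hgR : (g:ℝ) ≤ (ℓ:ℝ) ^ k := by exact_mod_cast hg
  have hg2R : (ℓ:ℝ) ^ k ≤ 2 * g := by exact_mod_cast hg2
  have hdk : 0 < d ^ k := by positivity
  constructor
  · have e1 : ((d / (R * (ℓ:ℝ) ^ (k + 2))) ^ k)⁻¹ = R ^ k * ((ℓ:ℝ) ^ (k + 2)) ^ k / d ^ k := by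
      rw [div_pow, inv_div, mul_pow]
    have e2 : ((d / (4 * (ℓ:ℝ) ^ k) / 2) ^ k)⁻¹ = 8 ^ k * ((ℓ:ℝ) ^ k) ^ k / d ^ k := by
      rw [div_div, div_pow, inv_div, ← mul_pow]; congr 2; ring
    have h1 : (g:ℝ) * (8 ^ k * ((ℓ:ℝ) ^ k) ^ k / d ^ k) ≤
        R ^ k * ((ℓ:ℝ) ^ (k + 2)) ^ k / d ^ k := by
      rw [mul_div_assoc']
      apply div_le_div_of_nonneg_right _ hdk.le
      calc (g:ℝ) * (8 ^ k * ((ℓ:ℝ) ^ k) ^ k) ≤ (ℓ:ℝ) ^ k * (R ^ k * ((ℓ:ℝ) ^ k) ^ k) := by gcongr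
        _ = R ^ k * ((ℓ:ℝ) ^ (k + 1)) ^ k := by
            rw [pow_succ (ℓ:ℝ) k, mul_pow]; ring
        _ ≤ _ := by gcongr <;> first | exact hℓ' | omega
    rw [e1, e2, hκ]
    calc _ ≤ d ^ k / (2 * R ^ k * ((ℓ:ℝ) ^ (k + 2)) ^ k) *
          (R ^ k * ((ℓ:ℝ) ^ (k + 2)) ^ k / d ^ k + R ^ k * ((ℓ:ℝ) ^ (k + 2)) ^ k / d ^ k) := by
          gcongr
      _ = 1 := by field_simp; norm_num
      _ ≤ 1 := le_rfl
  · have h1 : ((4:ℝ) ^ k)⁻¹ / d ^ k ≤ ((2 * d) ^ k)⁻¹ - ((4 * d) ^ k)⁻¹ := by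
      rw [mul_pow, mul_pow, mul_inv, mul_inv, ← sub_mul, div_eq_mul_inv]
      apply mul_le_mul_of_nonneg_right _ (by positivity)
      have h2 : (4:ℝ) ^ k = 2 ^ k * 2 ^ k := by rw [← mul_pow]; norm_num
      have h3 : (2:ℝ) ≤ 2 ^ k := by
        calc (2:ℝ) = 2 ^ 1 := by norm_num
          _ ≤ 2 ^ k := pow_le_pow_right₀ (by norm_num) hk
      have h4 : ((2:ℝ) ^ k)⁻¹ = 2 ^ k * ((4:ℝ) ^ k)⁻¹ := by rw [h2]; field_simp
      have h5 : 0 < ((4:ℝ) ^ k)⁻¹ := by positivity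
      rw [h4]; nlinarith
    calc 1 / (4 * (4 * R) ^ k * (ℓ:ℝ) ^ ((k + 1) * k))
        = κ * ((ℓ:ℝ) ^ k / 2 * (((4:ℝ) ^ k)⁻¹ / d ^ k)) := by
          rw [hκ, show (ℓ:ℝ) ^ ((k + 1) * k) = ((ℓ:ℝ) ^ (k + 1)) ^ k by rw [pow_mul],
            show (ℓ:ℝ) ^ (k + 2) = (ℓ:ℝ) ^ (k + 1) * ℓ by ring, mul_pow ((ℓ:ℝ) ^ (k + 1)), mul_pow 4 R]
          field_simp
          norm_num
      _ ≤ _ := by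
          rw [hκ]
          gcongr
          linarith

lemma pos_case {n k : ℕ} (hk1 : 1 ≤ k) (hnk : n = k + 2) {ψ : EuclideanSpace ℝ (Fin n) → ℝ}
    {lam : ℝ} (hl1 : 1 ≤ lam)
    (hψ : ContDiff ℝ (⊤ : ℕ∞) ψ) (hper : ZnPeriodic n ψ)
    (hlap : ∀ x, lap n ψ x = -lam * ψ x) {d : ℝ} (hd : 0 < d) (hd4 : d ≤ 1 / 4)
    (hld : lam * d ^ 2 ≤ 1 / 100) (D ℓ : ℕ) (hD0 : 0 < D) (hD : lam ≤ (D:ℝ) ^ 2) (hℓ : 1 ≤ ℓ)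
    (hℓn : 2 * ((n + 5) * (2 * D) * n + n + 3) ≤ ℓ ^ n)
    (hsmall : 52 * (4 * (80 * ((n:ℝ) + 1))) ^ k * (ℓ:ℝ) ^ ((k + 1) * k) * (lam * d ^ 2) < 1)
    {Ω : Set (EuclideanSpace ℝ (Fin n))} {x : EuclideanSpace ℝ (Fin n)} (hx : 0 < ψ x)
    (hΩ : Ω = connectedComponentIn {y | ψ y ≠ 0} x) :
    ∃ c, ball c d ⊆ Ω := by
  have hl : 0 < lam := by linarith
  have hn : 0 < n := by omega
  have hn3 : (3:ℝ) ≤ n := by rw [hnk]; push_cast; have : (1:ℝ) ≤ k := by exact_mod_cast hk1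
                             linarith
  obtain ⟨hxΩ, hΩo, hpos, hbd, hball⟩ := nodal_facts hψ.continuous hx hΩ
  obtain ⟨ym, hym⟩ := per_max hper hψ.continuous
  have hbdd : BddAbove (ψ '' Ω) := ⟨ψ ym, by rintro _ ⟨y, -, rfl⟩; exact hym y⟩
  set S := sSup (ψ '' Ω) with hS
  have hSle : ∀ y ∈ Ω, ψ y ≤ S := fun y hy => le_csSup hbdd ⟨y, hy, rfl⟩
  have hS0 : 0 < S := hx.trans_le (hSle x hxΩ)
  have hθ : 0 < lam * d ^ 2 := by positivity
  obtain ⟨_, ⟨x0, hx0, rfl⟩, hx0S⟩ := exists_lt_of_lt_csSup (s := ψ '' Ω)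
    (b := (1 - lam * d ^ 2) * S) ⟨_, x, hxΩ, rfl⟩ (by
      change _ < S
      nlinarith)
  refine ⟨x0, hball x0 hx0 d hd fun z hz hz0 => ?_⟩
  have hzd : ‖x0 - z‖ ≤ d := by
    rw [← dist_eq_norm, dist_comm]; exact (mem_ball.1 hz).le
  have hℓ0 : (0:ℝ) < ℓ := by exact_mod_cast hℓ
  obtain ⟨G, p, hGK, hKG, hGp, hsep⟩ := points hn hψ hper hl hlap D hD0 hD z hd hd4 hld hz0 x0 hzd
    (hpos x0 hx0) (ℓ ^ k) (ℓ ^ 2) (by positivity) (by positivity) (by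
      rw [← pow_add, ← hnk]; exact hℓn)
  set R : ℝ := 80 * ((n:ℝ) + 1) with hR
  have hR8 : 8 ≤ R := by rw [hR]; linarith
  have hR0 : 0 < R := by linarith
  obtain ⟨a1, a2⟩ := final_arith (κ := d ^ k / (2 * R ^ k * ((ℓ:ℝ) ^ (k + 2)) ^ k)) hk1 hℓ hR8 hd
    hGK hKG rfl
  have eτ : d / (4 * ((ℓ ^ k : ℕ):ℝ) * ((ℓ ^ 2 : ℕ):ℝ)) / (20 * (n + 1))
      = d / (R * (ℓ:ℝ) ^ (k + 2)) := by
    rw [hR, div_div]; congr 1; push_cast; ring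
  rw [eτ] at hGp
  have := barrier hnk hψ hl hlap hΩo hpos hbd (θ := lam * d ^ 2) (d := d)
    (τ := d / (R * (ℓ:ℝ) ^ (k + 2))) (σ := d / (4 * (ℓ:ℝ) ^ k))
    (κ := d ^ k / (2 * R ^ k * ((ℓ:ℝ) ^ (k + 2)) ^ k)) hS0 hSle hd (by positivity) (by positivity)
    (by positivity) hx0 hx0S.le G p (fun b hb => ?_) (fun b hb => (hGp b hb).2)
    (by simpa using hsep) a1
  · have h1 := a2.trans this
    have h2 : lam * d ^ 2 + 36 * (lam / n) * d ^ 2 ≤ 13 * (lam * d ^ 2) := by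
      have : lam / n ≤ lam / 3 := by gcongr
      nlinarith [sq_nonneg d]
    have h3 := h1.trans h2
    rw [div_le_iff₀ (by positivity)] at h3
    nlinarith
  · have h6 : x0 - p b = (x0 - z) - (p b - z) := by abel
    have h7 := norm_sub_le (x0 - z) (p b - z)
    rw [← h6] at h7
    linarith [(hGp b hb).1]

lemma bdd_inner {n : ℕ} {ψ : EuclideanSpace ℝ (Fin n) → ℝ}
    {lam : ℝ} (hl : 0 < lam) (hψ : ContDiff ℝ (⊤ : ℕ∞) ψ) (hper : ZnPeriodic n ψ)
    (hlap : ∀ x, lap n ψ x = -lam * ψ x)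
    {Ω : Set (EuclideanSpace ℝ (Fin n))} (hpos : ∀ y ∈ Ω, 0 < ψ y) :
    BddAbove {ρ : ℝ | 0 < ρ ∧ ∃ c, Metric.ball c ρ ⊆ Ω} := by
  refine ⟨√n, ?_⟩
  rintro ρ ⟨-, c, hc⟩
  by_contra hlt
  push Not at hlt
  have hall : ∀ x, 0 < ψ x := fun x => by
    obtain ⟨y, hy, hyx⟩ := per_rep hper x c
    rw [← hyx]
    exact hpos y (hc (by rw [mem_ball, dist_eq_norm]; linarith))
  have hper' : ZnPeriodic n (fun x => (-1) * ψ x) := fun x v => by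
    simp only []
    rw [hper x v]
  obtain ⟨y, hy⟩ := per_max hper' (by have := hψ.continuous; fun_prop)
  have hL := (hasLap_smooth hψ y).const_mul (-1)
  have h2 := Finset.sum_nonpos fun i (_ : i ∈ Finset.univ) =>
    hL.nonpos (Eventually.of_forall hy) i
  have e4 := hlap y
  simp only [lap] at e4
  rw [← Finset.mul_sum, e4] at h2
  nlinarith [hall y, mul_pos hl (hall y)]

lemma lap_neg' {n : ℕ} (ψ : EuclideanSpace ℝ (Fin n) → ℝ) (x : EuclideanSpace ℝ (Fin n)) :
    lap n (fun y => -ψ y) x = -lap n ψ x := by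
  simp only [lap, fderiv_fun_neg, neg_apply, Finset.sum_neg_distrib]

lemma const_choice {n k : ℕ} (hk1 : 1 ≤ k) (hnk : n = k + 2) :
    ∃ a : ℝ, 0 < a ∧ ∀ lam : ℝ, 1 ≤ lam → ∃ D ℓ : ℕ, 0 < D ∧ lam ≤ (D:ℝ) ^ 2 ∧ 1 ≤ ℓ ∧
      2 * ((n + 5) * (2 * D) * n + n + 3) ≤ ℓ ^ n ∧ ∀ d : ℝ,
      d = a * lam ^ (-(1:ℝ)/2 - ((n:ℝ)-1)*((n:ℝ)-2)/(4*(n:ℝ))) →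
      0 < d ∧ d ≤ 1 / 4 ∧ lam * d ^ 2 ≤ 1 / 100 ∧
      52 * (4 * (80 * ((n:ℝ) + 1))) ^ k * (ℓ:ℝ) ^ ((k + 1) * k) * (lam * d ^ 2) < 1 := by
  have hn3 : (3:ℝ) ≤ n := by rw [hnk]; push_cast; have : (1:ℝ) ≤ k := by exact_mod_cast hk1
                             linarith
  have hn0 : (0:ℝ) < n := by linarith
  set C : ℝ := 8 * n * (n + 5) + 2 * n + 6 with hC
  have hC1 : 1 ≤ C := by rw [hC]; nlinarith
  set γ2 : ℝ := ((n:ℝ)-1)*((n:ℝ)-2)/(2*(n:ℝ)) with hγ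
  have hγ0 : 0 ≤ γ2 := by
    rw [hγ]; apply div_nonneg (mul_nonneg (by linarith) (by linarith)) (by linarith)
  set W : ℝ := 52 * (4 * (80 * ((n:ℝ) + 1))) ^ k * (2 ^ ((k + 1) * k) * C ^ (2 * γ2)) with hW
  have hW0 : 0 < W := by positivity
  have ha0 : 0 < 1 / (10 * (1 + W)) := by positivity
  have ha1 : 1 / (10 * (1 + W)) ≤ 1 / 10 := by gcongr; linarith
  refine ⟨1 / (10 * (1 + W)), ha0, fun lam hl => ?_⟩
  set a := 1 / (10 * (1 + W)) with ha
  have haW : a * W ≤ 1 / 10 := by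
    rw [ha, div_mul_eq_mul_div, div_le_div_iff₀ (by positivity) (by norm_num)]; nlinarith
  have hl0 : 0 < lam := by linarith
  have hs1 : 1 ≤ √lam := by rw [Real.one_le_sqrt]; exact hl
  have hD0 : (√lam : ℝ) ≤ ⌈√lam⌉₊ := Nat.le_ceil _
  have hD1 : (⌈√lam⌉₊ : ℝ) ≤ 2 * √lam := by
    have := Nat.ceil_lt_add_one (Real.sqrt_nonneg lam); linarith
  set X : ℝ := C * √lam with hX
  have hX1 : 1 ≤ X := by rw [hX]; nlinarith
  have hX0 : 0 < X := by linarith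
  have hy1 : 1 ≤ X ^ (1 / (n:ℝ)) := Real.one_le_rpow hX1 (by positivity)
  have hℓ0 : X ^ (1 / (n:ℝ)) ≤ ⌈X ^ (1 / (n:ℝ))⌉₊ := Nat.le_ceil _
  have hℓ1 : (⌈X ^ (1 / (n:ℝ))⌉₊ : ℝ) ≤ 2 * X ^ (1 / (n:ℝ)) := by
    have := Nat.ceil_lt_add_one (by linarith : 0 ≤ X ^ (1 / (n:ℝ))); linarith
  refine ⟨⌈√lam⌉₊, ⌈X ^ (1 / (n:ℝ))⌉₊, Nat.ceil_pos.2 (by linarith), ?_,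
    Nat.ceil_pos.2 (by linarith), ?_, ?_⟩
  · calc lam = √lam ^ 2 := (Real.sq_sqrt hl0.le).symm
      _ ≤ _ := by gcongr
  · have h1 : ((2 * ((n + 5) * (2 * ⌈√lam⌉₊) * n + n + 3) : ℕ) : ℝ) ≤ X := by
      push_cast
      calc (2 * (((n:ℝ) + 5) * (2 * ⌈√lam⌉₊) * n + n + 3))
          ≤ 2 * (((n:ℝ) + 5) * (2 * (2 * √lam)) * n + n * √lam + 3 * √lam) := by
            have h1 : (n:ℝ) ≤ n * √lam := le_mul_of_one_le_right hn0.le hs1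
            have h2 : (3:ℝ) ≤ 3 * √lam := by linarith
            gcongr
        _ = X := by rw [hX, hC]; ring
    have h2 : X = (X ^ (1 / (n:ℝ))) ^ n := by
      rw [← Real.rpow_natCast, ← Real.rpow_mul hX0.le, one_div_mul_cancel hn0.ne', Real.rpow_one]
    have h3 : X ≤ (⌈X ^ (1 / (n:ℝ))⌉₊ : ℝ) ^ n := by
      conv_lhs => rw [h2]
      gcongr
    exact_mod_cast h1.trans h3
  · rintro d hd
    have hexp : -(1:ℝ)/2 - ((n:ℝ)-1)*((n:ℝ)-2)/(4*(n:ℝ)) = -(1/2) - γ2 / 2 := by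
      rw [hγ]; field_simp; ring
    rw [hexp] at hd
    have hp0 : 0 < lam ^ (-(1/2) - γ2 / 2 : ℝ) := by positivity
    have hp1 : lam ^ (-(1/2) - γ2 / 2 : ℝ) ≤ 1 :=
      Real.rpow_le_one_of_one_le_of_nonpos hl (by linarith)
    have hd0 : 0 < d := by rw [hd]; positivity
    have hd1 : d ≤ 1 / 10 := by
      rw [hd]; exact (mul_le_of_le_one_right ha0.le hp1).trans ha1
    have hsq : lam * d ^ 2 = a ^ 2 * lam ^ (-γ2) := by
      have h1 : (lam ^ (-(1/2) - γ2 / 2 : ℝ)) ^ 2 = lam ^ (-1 - γ2) := by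
        rw [← Real.rpow_natCast, ← Real.rpow_mul hl0.le]; congr 1; push_cast; ring
      have h2 : lam * lam ^ (-1 - γ2) = lam ^ (-γ2) := by
        nth_rewrite 1 [← Real.rpow_one lam]
        rw [← Real.rpow_add hl0]; congr 1; ring
      rw [hd, mul_pow, h1, ← h2]; ring
    have hq1 : lam ^ (-γ2) ≤ 1 := Real.rpow_le_one_of_one_le_of_nonpos hl (by linarith)
    have hq0 : 0 < lam ^ (-γ2) := by positivity
    have ha2 : a ^ 2 ≤ 1 / 100 := by
      have := pow_le_pow_left₀ ha0.le ha1 2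
      norm_num at this; linarith
    refine ⟨hd0, by linarith, ?_, ?_⟩
    · rw [hsq]; exact (mul_le_of_le_one_right (sq_nonneg a) hq1).trans ha2
    · have h1 : (⌈X ^ (1 / (n:ℝ))⌉₊ : ℝ) ^ ((k + 1) * k) ≤
          2 ^ ((k + 1) * k) * C ^ (2 * γ2) * lam ^ γ2 := by
        calc (⌈X ^ (1 / (n:ℝ))⌉₊ : ℝ) ^ ((k + 1) * k) ≤ (2 * X ^ (1 / (n:ℝ))) ^ ((k + 1) * k) := by
              gcongr
          _ = 2 ^ ((k + 1) * k) * X ^ (2 * γ2) := by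
              rw [mul_pow, ← Real.rpow_natCast (X ^ (1 / (n:ℝ))), ← Real.rpow_mul hX0.le]
              congr 2
              rw [hγ, hnk]; push_cast; field_simp; ring
          _ = _ := by
              rw [hX, Real.mul_rpow (by linarith) (Real.sqrt_nonneg _), Real.sqrt_eq_rpow,
                ← Real.rpow_mul hl0.le, mul_assoc]
              congr 3; ring
      have h2 : lam ^ γ2 * lam ^ (-γ2) = 1 := by
        rw [← Real.rpow_add hl0]; simp
      rw [hsq]
      calc _ ≤ 52 * (4 * (80 * ((n:ℝ) + 1))) ^ k *
            (2 ^ ((k + 1) * k) * C ^ (2 * γ2) * lam ^ γ2) * (a ^ 2 * lam ^ (-γ2)) := by gcongr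
        _ = W * a ^ 2 * (lam ^ γ2 * lam ^ (-γ2)) := by rw [hW]; ring
        _ = (a * W) * a := by rw [h2]; ring
        _ < 1 := lt_of_le_of_lt (mul_le_mul haW ha1 ha0.le (by norm_num)) (by norm_num)

theorem mangoubi_inner_radius_lower_bound
    (n : ℕ) (hn : 3 ≤ n) :
    ∃ a₁ : ℝ, 0 < a₁ ∧
      ∀ (ψ : EuclideanSpace ℝ (Fin n) → ℝ) (lam : ℝ),
        1 ≤ lam → ContDiff ℝ (⊤ : ℕ∞) ψ → ZnPeriodic n ψ →
        (∀ x, lap n ψ x = -lam * ψ x) →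
        ∀ Ω, IsNodalDomain ψ Ω →
          a₁ * lam ^ (-(1:ℝ)/2 - ((n:ℝ)-1)*((n:ℝ)-2)/(4*(n:ℝ))) ≤ innerRadius Ω := by
  obtain ⟨k, rfl⟩ : ∃ k, n = k + 2 := ⟨n - 2, by omega⟩
  have hk1 : 1 ≤ k := by omega
  obtain ⟨a, ha, hch⟩ := const_choice hk1 rfl
  refine ⟨a, ha, fun ψ lam hl hψ hper hlap Ω hΩ => ?_⟩
  obtain ⟨D, ℓ, hD0, hD, hℓ, hℓn, hall⟩ := hch lam hl
  obtain ⟨hd0, hd4, hld, hsmall⟩ := hall _ rfl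
  have main : ∀ φ : EuclideanSpace ℝ (Fin (k + 2)) → ℝ, ContDiff ℝ (⊤ : ℕ∞) φ →
      ZnPeriodic (k + 2) φ → (∀ x, lap (k + 2) φ x = -lam * φ x) → ∀ x, 0 < φ x →
      Ω = connectedComponentIn {y | φ y ≠ 0} x →
      a * lam ^ (-(1:ℝ)/2 - (((k + 2 : ℕ):ℝ)-1)*(((k + 2 : ℕ):ℝ)-2)/(4*((k + 2 : ℕ):ℝ)))
        ≤ innerRadius Ω := by
    intro φ hφ hperφ hlapφ x hx hΩx
    have hfacts := nodal_facts hφ.continuous hx hΩx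
    exact le_csSup (bdd_inner (by linarith) hφ hperφ hlapφ hfacts.2.2.1)
      ⟨hd0, pos_case hk1 rfl hl hφ hperφ hlapφ hd0 hd4 hld D ℓ hD0 hD hℓ hℓn hsmall hx hΩx⟩
  obtain ⟨x, hx, hΩx⟩ := hΩ
  rcases lt_or_gt_of_ne hx with h | h
  · refine main (fun y => -ψ y) hψ.neg (fun x v => ?_) (fun x => ?_) x (by simpa using h) ?_
    · simp only []
      rw [hper x v]
    · rw [lap_neg', hlap]; ring
    · rw [hΩx]; simp
  · exact main ψ hψ hper hlap x h hΩx
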